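/- arXiv:0807.2280 — 4 statements merged into one kernel-verified Lean document; each statement's English description precedes it below -/
import Mathlib

section
/- Integral commutator identity (key step of the magnetic virial identity): Let n ≥ 3, A ∈ C²(ℝⁿ; ℝⁿ), V ∈ C¹(ℝⁿ; ℝ), and let φ : ℝⁿ → ℝ be a C⁴ radial function. Define Hw = −∇_A·(∇_A w) + Vw and Tw = 2∇φ·∇_A w + (Δφ)w. Then for every u ∈ C_c^∞(ℝⁿ; ℂ): ∫ conj(u)·(H(Tu) − T(Hu)) dx = 4 ∫ Σ_{j,k} ∂_j∂_kφ · (∇_A u)_j · conj((∇_A u)_k) dx − ∫ |u|² Δ²φ dx − 2 ∫ |u|² ∇φ·∇V dx + 4 Im ∫ u · Σ_{j,k} ∂_jφ · B_{jk} · conj((∇_A u)_k) dx. -/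
/-!
Write `D_k = ∂_k - i A_k`. The operator `T` satisfies
`[D_k, T] w = 2 Σ_j ∂_k∂_jφ D_j w + 2i Σ_j ∂_jφ B_{kj} w + (∂_kΔφ) w` (`magD_Tmul`), which follows
from the Leibniz rule and from `[D_j, D_k] = i B_{jk}` (`magD_comm`). Hence
`[H, T] = -Σ_k (D_k [D_k, T] + [D_k, T] D_k) - 2 ∇φ·∇V` (`commutator_eq`). Moving the
coefficients of the second-order terms inside the outer derivative makes all terms in `∇Δφ`
cancel (`commutator_div`):
`[H, T] u = -4 Σ D_k(∂_j∂_kφ D_j u) + 2i Σ D_k(∂_jφ B_{jk} u) + 2i Σ ∂_jφ B_{jk} D_k u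
  - (Δ²φ) u - 2 (∇φ·∇V) u`.

Pairing with `conj u` and using that `-D_k` is the formal adjoint of `D_k` (`magD_ibp`), the first
term becomes the Hessian term, and the two field terms become `-2i z + 2i conj z = 4 Im z` with
`z = ∫ u Σ ∂_jφ B_{jk} conj(D_k u)`.
-/

open MeasureTheory Complex
open scoped BigOperators

noncomputable section

/-- The magnetic (covariant) partial derivative `(∂ₖ - i Aₖ) w`. -/
noncomputable def magD {n : ℕ} (A : EuclideanSpace ℝ (Fin n) → EuclideanSpace ℝ (Fin n))
    (k : Fin n) (w : EuclideanSpace ℝ (Fin n) → ℂ) (x : EuclideanSpace ℝ (Fin n)) : ℂ :=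
  fderiv ℝ w x (EuclideanSpace.single k 1) - Complex.I * (A x k : ℂ) * w x

/-- The partial derivative `∂ₖ f` of a real-valued function. -/
noncomputable def pdR {n : ℕ} (f : EuclideanSpace ℝ (Fin n) → ℝ) (k : Fin n)
    (x : EuclideanSpace ℝ (Fin n)) : ℝ :=
  fderiv ℝ f x (EuclideanSpace.single k 1)

/-- The Laplacian `Δf = Σₖ ∂ₖ∂ₖ f` of a real-valued function. -/
noncomputable def lap {n : ℕ} (f : EuclideanSpace ℝ (Fin n) → ℝ)
    (x : EuclideanSpace ℝ (Fin n)) : ℝ :=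
  ∑ k, pdR (pdR f k) k x

/-- The magnetic Schrödinger operator `H w = -∇_A·(∇_A w) + V w`. -/
noncomputable def Hop {n : ℕ} (A : EuclideanSpace ℝ (Fin n) → EuclideanSpace ℝ (Fin n))
    (V : EuclideanSpace ℝ (Fin n) → ℝ) (w : EuclideanSpace ℝ (Fin n) → ℂ)
    (x : EuclideanSpace ℝ (Fin n)) : ℂ :=
  -∑ k, magD A k (magD A k w) x + (V x : ℂ) * w x

/-- The multiplier operator `T w = 2∇φ·∇_A w + (Δφ) w`. -/
noncomputable def Tmul {n : ℕ} (A : EuclideanSpace ℝ (Fin n) → EuclideanSpace ℝ (Fin n))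
    (φ : EuclideanSpace ℝ (Fin n) → ℝ) (w : EuclideanSpace ℝ (Fin n) → ℂ)
    (x : EuclideanSpace ℝ (Fin n)) : ℂ :=
  2 * ∑ k, (pdR φ k x : ℂ) * magD A k w x + (lap φ x : ℂ) * w x

/-- The matrix field `B_{jk} = ∂Aⱼ/∂xₖ - ∂Aₖ/∂xⱼ`. -/
noncomputable def Bfield {n : ℕ} (A : EuclideanSpace ℝ (Fin n) → EuclideanSpace ℝ (Fin n))
    (j k : Fin n) (x : EuclideanSpace ℝ (Fin n)) : ℝ :=
  pdR (fun y => A y j) k x - pdR (fun y => A y k) j x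

section Calculus

variable {n : ℕ}

local notation "𝔼" n => EuclideanSpace ℝ (Fin n)

/-! ### Regularity -/

lemma contDiff_pdR {m p : WithTop ℕ∞} {f : (𝔼 n) → ℝ} (hf : ContDiff ℝ p f) (h : m + 1 ≤ p)
    (k : Fin n) : ContDiff ℝ m (pdR f k) :=
  (hf.fderiv_right h).clm_apply contDiff_const

lemma contDiff_lap {m p : WithTop ℕ∞} {f : (𝔼 n) → ℝ} (hf : ContDiff ℝ p f) (h : m + 1 + 1 ≤ p) :
    ContDiff ℝ m (lap f) :=
  ContDiff.sum fun k _ => contDiff_pdR (contDiff_pdR hf h k) le_rfl k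

lemma contDiff_coord {m : WithTop ℕ∞} {A : (𝔼 n) → 𝔼 n} (hA : ContDiff ℝ m A) (k : Fin n) :
    ContDiff ℝ m (fun x => A x k) :=
  (EuclideanSpace.proj (𝕜 := ℝ) k).contDiff.comp hA

lemma contDiff_coe {m : WithTop ℕ∞} {f : (𝔼 n) → ℝ} (hf : ContDiff ℝ m f) :
    ContDiff ℝ m (fun x => (f x : ℂ)) :=
  Complex.ofRealCLM.contDiff.comp hf

lemma contDiff_magD {m p : WithTop ℕ∞} {A : (𝔼 n) → 𝔼 n} {w : (𝔼 n) → ℂ}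
    (hA : ContDiff ℝ m A) (hw : ContDiff ℝ p w) (h : m + 1 ≤ p) (k : Fin n) :
    ContDiff ℝ m (magD A k w) :=
  ((hw.fderiv_right h).clm_apply contDiff_const).sub
    ((contDiff_const.mul (contDiff_coe (contDiff_coord hA k))).mul
      (hw.of_le (le_trans le_self_add h)))

lemma contDiff_Bfield {m p : WithTop ℕ∞} {A : (𝔼 n) → 𝔼 n} (hA : ContDiff ℝ p A) (h : m + 1 ≤ p)
    (j k : Fin n) : ContDiff ℝ m (Bfield A j k) :=
  (contDiff_pdR (contDiff_coord hA j) h k).sub (contDiff_pdR (contDiff_coord hA k) h j)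

/-! ### Product and sum rules -/

lemma pdR_sum {f : Fin n → (𝔼 n) → ℝ} (hf : ∀ j, ContDiff ℝ 1 (f j)) (k : Fin n) (x : 𝔼 n) :
    pdR (fun y => ∑ j, f j y) k x = ∑ j, pdR (f j) k x := by
  simp only [pdR]
  rw [fderiv_fun_sum fun j _ => ((hf j).differentiable one_ne_zero) x]
  simp

/-- Equality of mixed second partial derivatives. -/
lemma pdR_comm {f : (𝔼 n) → ℝ} (hf : ContDiff ℝ 2 f) (j k : Fin n) (x : 𝔼 n) :
    pdR (pdR f k) j x = pdR (pdR f j) k x := by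
  have hd : DifferentiableAt ℝ (fderiv ℝ f) x :=
    ((hf.fderiv_right (m := 1) (by norm_num)).differentiable one_ne_zero) x
  have hs := (hf.contDiffAt (x := x)).isSymmSndFDerivAt (by simp)
  have key : ∀ a b : Fin n, pdR (pdR f a) b x
      = fderiv ℝ (fderiv ℝ f) x (EuclideanSpace.single b 1) (EuclideanSpace.single a 1) := by
    intro a b
    have : pdR f a = fun y => fderiv ℝ f y (EuclideanSpace.single a 1) := rfl
    rw [pdR, this, fderiv_clm_apply hd (differentiableAt_const _)]
    simp
  rw [key, key, hs]

lemma magD_add {A : (𝔼 n) → 𝔼 n} {v w : (𝔼 n) → ℂ} (hv : ContDiff ℝ 1 v) (hw : ContDiff ℝ 1 w)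
    (k : Fin n) (x : 𝔼 n) :
    magD A k (fun y => v y + w y) x = magD A k v x + magD A k w x := by
  simp only [magD]
  rw [fderiv_fun_add (hv.differentiable one_ne_zero x) (hw.differentiable one_ne_zero x)]
  simp; ring

lemma magD_const_mul {A : (𝔼 n) → 𝔼 n} {w : (𝔼 n) → ℂ} (hw : ContDiff ℝ 1 w) (c : ℂ)
    (k : Fin n) (x : 𝔼 n) :
    magD A k (fun y => c * w y) x = c * magD A k w x := by
  simp only [magD]
  rw [fderiv_const_mul (hw.differentiable one_ne_zero x)]
  simp; ring

lemma magD_sum {A : (𝔼 n) → 𝔼 n} {w : Fin n → (𝔼 n) → ℂ} (hw : ∀ j, ContDiff ℝ 1 (w j))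
    (k : Fin n) (x : 𝔼 n) :
    magD A k (fun y => ∑ j, w j y) x = ∑ j, magD A k (w j) x := by
  simp only [magD]
  rw [fderiv_fun_sum fun j _ => ((hw j).differentiable one_ne_zero) x]
  simp [Finset.mul_sum]

lemma magD_coe_mul {A : (𝔼 n) → 𝔼 n} {f : (𝔼 n) → ℝ} {w : (𝔼 n) → ℂ} (hf : ContDiff ℝ 1 f)
    (hw : ContDiff ℝ 1 w) (k : Fin n) (x : 𝔼 n) :
    magD A k (fun y => (f y : ℂ) * w y) x
      = (pdR f k x : ℂ) * w x + (f x : ℂ) * magD A k w x := by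
  have hc : HasFDerivAt (fun y => (f y : ℂ)) (Complex.ofRealCLM.comp (fderiv ℝ f x)) x :=
    Complex.ofRealCLM.hasFDerivAt.comp x (hf.differentiable one_ne_zero x).hasFDerivAt
  simp only [magD, pdR]
  rw [(hc.fun_mul (hw.differentiable one_ne_zero x).hasFDerivAt).fderiv]
  simp; ring

/-- The magnetic derivatives commute up to the field: `[D_j, D_k] = i B_{jk}`. -/
lemma magD_comm {A : (𝔼 n) → 𝔼 n} {w : (𝔼 n) → ℂ} (hA : ContDiff ℝ 1 A)
    (hw : ContDiff ℝ 2 w) (j k : Fin n) (x : 𝔼 n) :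
    magD A j (magD A k w) x
      = magD A k (magD A j w) x + Complex.I * (Bfield A j k x : ℂ) * w x := by
  have hd : DifferentiableAt ℝ (fderiv ℝ w) x :=
    ((hw.fderiv_right (m := 1) (by norm_num)).differentiable one_ne_zero) x
  have hs := (hw.contDiffAt (x := x)).isSymmSndFDerivAt (by simp)
  have hw1 : DifferentiableAt ℝ w x := hw.differentiable two_ne_zero x
  have key : ∀ a b : Fin n, magD A b (magD A a w) x
      = fderiv ℝ (fderiv ℝ w) x (EuclideanSpace.single b 1) (EuclideanSpace.single a 1)
        - Complex.I * ((pdR (fun y => A y a) b x : ℂ) * w x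
            + (A x a : ℂ) * fderiv ℝ w x (EuclideanSpace.single b 1))
        - Complex.I * (A x b : ℂ) * magD A a w x := by
    intro a b
    have hA1 : DifferentiableAt ℝ (fun y => A y a) x :=
      (contDiff_coord hA a).differentiable one_ne_zero x
    have hc : HasFDerivAt (fun y => (A y a : ℂ))
        (Complex.ofRealCLM.comp (fderiv ℝ (fun y => A y a) x)) x :=
      Complex.ofRealCLM.hasFDerivAt.comp x hA1.hasFDerivAt
    have h1 : HasFDerivAt (fun y => fderiv ℝ w y (EuclideanSpace.single a 1)) _ x :=
      hd.hasFDerivAt.clm_apply (hasFDerivAt_const (EuclideanSpace.single a (1:ℝ)) x)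
    have h2 := h1.fun_sub ((hc.const_mul Complex.I).fun_mul hw1.hasFDerivAt)
    have : magD A a w = fun y => fderiv ℝ w y (EuclideanSpace.single a 1)
      - Complex.I * (A y a : ℂ) * w y := rfl
    conv_lhs => rw [magD, this, h2.fderiv]
    simp [pdR, magD]; ring
  rw [key, key, hs]
  simp only [Bfield, magD]
  push_cast; ring

lemma pdR_lap {φ : (𝔼 n) → ℝ} (hφ : ContDiff ℝ 4 φ) (k : Fin n) (x : 𝔼 n) :
    pdR (lap φ) k x = ∑ j, pdR (pdR (pdR φ k) j) j x := by
  have h3 : ∀ j, ContDiff ℝ 3 (pdR φ j) := fun j => contDiff_pdR hφ (by norm_num) j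
  have : lap φ = fun y => ∑ j, pdR (pdR φ j) j y := rfl
  rw [this, pdR_sum fun j => contDiff_pdR (h3 j) (by norm_num) j]
  refine Finset.sum_congr rfl fun j _ => ?_
  rw [pdR_comm ((h3 j).of_le (by norm_num)) k j]
  congr 1
  funext y
  exact pdR_comm (hφ.of_le (by norm_num)) k j y

/-! ### The pointwise commutator -/

/-- The commutator `[D_k, T]`, a first-order operator:
`[D_k, T] w = 2 Σ_j ∂_k∂_jφ D_j w + 2i Σ_j ∂_jφ B_{kj} w + (∂_kΔφ) w`. -/
def commDT (A : (𝔼 n) → 𝔼 n) (φ : (𝔼 n) → ℝ) (k : Fin n) (w : (𝔼 n) → ℂ) (x : 𝔼 n) : ℂ :=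
  2 * ∑ j, (pdR (pdR φ j) k x : ℂ) * magD A j w x
    + 2 * Complex.I * ∑ j, ((pdR φ j x * Bfield A k j x : ℝ) : ℂ) * w x
    + (pdR (lap φ) k x : ℂ) * w x

lemma contDiff_Tmul {m : WithTop ℕ∞} {A : (𝔼 n) → 𝔼 n} {φ : (𝔼 n) → ℝ} {w : (𝔼 n) → ℂ}
    (hA : ContDiff ℝ m A) (hφ : ContDiff ℝ (m + 1 + 1) φ) (hw : ContDiff ℝ (m + 1) w) :
    ContDiff ℝ m (Tmul A φ w) :=
  (contDiff_const.mul (ContDiff.sum fun k _ =>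
    (contDiff_coe (contDiff_pdR hφ le_self_add k)).mul
      (contDiff_magD hA hw le_rfl k))).add
    ((contDiff_coe (contDiff_lap hφ le_rfl)).mul (hw.of_le le_self_add))

lemma magD_Tmul {A : (𝔼 n) → 𝔼 n} {φ : (𝔼 n) → ℝ} {w : (𝔼 n) → ℂ} (hA : ContDiff ℝ 2 A)
    (hφ : ContDiff ℝ 4 φ) (hw : ContDiff ℝ 2 w) (k : Fin n) (x : 𝔼 n) :
    magD A k (Tmul A φ w) x = Tmul A φ (magD A k w) x + commDT A φ k w x := by
  have hA1 : ContDiff ℝ 1 A := hA.of_le (by norm_num)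
  have hw1 : ContDiff ℝ 1 w := hw.of_le (by norm_num)
  have hp : ∀ j, ContDiff ℝ 1 (pdR φ j) := fun j =>
    (contDiff_pdR (m := 3) hφ (by norm_num) j).of_le (by norm_num)
  have hl : ContDiff ℝ 1 (lap φ) := (contDiff_lap (m := 2) hφ (by norm_num)).of_le (by norm_num)
  have hD : ∀ j, ContDiff ℝ 1 (magD A j w) := fun j => contDiff_magD hA1 hw (by norm_num) j
  have hpD : ∀ j, ContDiff ℝ 1 (fun y => (pdR φ j y : ℂ) * magD A j w y) := fun j =>
    (contDiff_coe (hp j)).mul (hD j)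
  have hT : Tmul A φ w = fun y => 2 * (∑ j, (pdR φ j y : ℂ) * magD A j w y)
      + (lap φ y : ℂ) * w y := rfl
  rw [hT, magD_add (contDiff_const.mul (ContDiff.sum fun j _ => hpD j))
      ((contDiff_coe hl).mul hw1), magD_const_mul (ContDiff.sum fun j _ => hpD j),
    magD_sum hpD, magD_coe_mul hl hw1]
  have : ∀ j, magD A k (fun y => (pdR φ j y : ℂ) * magD A j w y) x
      = (pdR (pdR φ j) k x : ℂ) * magD A j w x + (pdR φ j x : ℂ) * magD A j (magD A k w) x
        + Complex.I * (((pdR φ j x * Bfield A k j x : ℝ) : ℂ) * w x) := by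
    intro j
    rw [magD_coe_mul (hp j) (hD j), magD_comm hA1 hw k j]
    push_cast; ring
  simp only [this, Finset.sum_add_distrib, Tmul, commDT, ← Finset.mul_sum]
  ring

lemma Tmul_add {A : (𝔼 n) → 𝔼 n} {φ : (𝔼 n) → ℝ} {v w : (𝔼 n) → ℂ} (hv : ContDiff ℝ 1 v)
    (hw : ContDiff ℝ 1 w) (x : 𝔼 n) :
    Tmul A φ (fun y => v y + w y) x = Tmul A φ v x + Tmul A φ w x := by
  simp only [Tmul, magD_add hv hw, mul_add, Finset.sum_add_distrib]
  ring

lemma Tmul_neg_sum {A : (𝔼 n) → 𝔼 n} {φ : (𝔼 n) → ℝ} {v : Fin n → (𝔼 n) → ℂ}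
    (hv : ∀ k, ContDiff ℝ 1 (v k)) (x : 𝔼 n) :
    Tmul A φ (fun y => -∑ k, v k y) x = -∑ k, Tmul A φ (v k) x := by
  have h : ∀ j, magD A j (fun y => -∑ k, v k y) x = -∑ k, magD A j (v k) x := by
    intro j
    have := magD_const_mul (A := A) (ContDiff.sum fun k (_ : k ∈ Finset.univ) => hv k) (-1) j x
    simp only [neg_mul, one_mul] at this
    rw [this, magD_sum hv]
  simp only [Tmul, h, Finset.sum_add_distrib, ← Finset.mul_sum, mul_neg, Finset.sum_neg_distrib]
  rw [Finset.sum_comm]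
  simp only [Finset.mul_sum]
  ring

lemma Tmul_coe_mul {A : (𝔼 n) → 𝔼 n} {φ V : (𝔼 n) → ℝ} {w : (𝔼 n) → ℂ} (hV : ContDiff ℝ 1 V)
    (hw : ContDiff ℝ 1 w) (x : 𝔼 n) :
    Tmul A φ (fun y => (V y : ℂ) * w y) x
      = (V x : ℂ) * Tmul A φ w x + 2 * ((∑ k, pdR φ k x * pdR V k x : ℝ) : ℂ) * w x := by
  have h : ∑ k, (pdR φ k x : ℂ) * magD A k (fun y => (V y : ℂ) * w y) x
      = (∑ k, (pdR φ k x : ℂ) * (pdR V k x : ℂ)) * w x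
        + (V x : ℂ) * ∑ k, (pdR φ k x : ℂ) * magD A k w x := by
    rw [Finset.sum_mul, Finset.mul_sum, ← Finset.sum_add_distrib]
    exact Finset.sum_congr rfl fun k _ => by rw [magD_coe_mul hV hw]; ring
  simp only [Tmul, h]
  push_cast
  ring

/-- `[H, T] = -Σ_k (D_k [D_k, T] + [D_k, T] D_k) - 2 ∇φ·∇V`. -/
lemma commutator_eq {A : (𝔼 n) → 𝔼 n} {φ V : (𝔼 n) → ℝ} {u : (𝔼 n) → ℂ} (hA : ContDiff ℝ 2 A)
    (hV : ContDiff ℝ 1 V) (hφ : ContDiff ℝ 4 φ) (hu : ContDiff ℝ 3 u) (x : 𝔼 n) :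
    Hop A V (Tmul A φ u) x - Tmul A φ (Hop A V u) x
      = -∑ k, (magD A k (commDT A φ k u) x + commDT A φ k (magD A k u) x)
        - 2 * ((∑ k, pdR φ k x * pdR V k x : ℝ) : ℂ) * u x := by
  have hA1 : ContDiff ℝ 1 A := hA.of_le (by norm_num)
  have hu1 : ContDiff ℝ 1 u := hu.of_le (by norm_num)
  have hD : ∀ j, ContDiff ℝ 2 (magD A j u) := fun j => contDiff_magD hA hu (by norm_num) j
  have hDD : ∀ j, ContDiff ℝ 1 (magD A j (magD A j u)) := fun j =>
    contDiff_magD hA1 (hD j) (by norm_num) j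
  have hH : Hop A V u = fun y => (-∑ k, magD A k (magD A k u) y) + (V y : ℂ) * u y := rfl
  rw [hH, Tmul_add (ContDiff.sum fun k _ => hDD k).neg ((contDiff_coe hV).mul hu1),
    Tmul_neg_sum hDD, Tmul_coe_mul hV hu1, Hop]
  have hT : ∀ k, ContDiff ℝ 1 (Tmul A φ (magD A k u)) := fun k =>
    contDiff_Tmul hA1 (hφ.of_le (by norm_num)) ((hD k).of_le (by norm_num))
  have hG : ∀ k, ContDiff ℝ 1 (commDT A φ k u) := fun k =>
    ((contDiff_const.mul (ContDiff.sum fun j _ => (contDiff_coe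
      (contDiff_pdR (contDiff_pdR (m := 3) hφ (by norm_num) j)
        (by norm_num) k)).mul ((hD j).of_le (by norm_num)))).add
      (contDiff_const.mul (ContDiff.sum fun j _ => (contDiff_coe
        ((contDiff_pdR hφ (by norm_num) j).mul
          (contDiff_Bfield hA (by norm_num) k j))).mul hu1))).add
      ((contDiff_coe (contDiff_pdR (contDiff_lap (m := 2) hφ (by norm_num))
        (by norm_num) k)).mul hu1)
  have key : ∀ k, magD A k (magD A k (Tmul A φ u)) x
      = Tmul A φ (magD A k (magD A k u)) x
        + (magD A k (commDT A φ k u) x + commDT A φ k (magD A k u) x) := by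
    intro k
    have : magD A k (Tmul A φ u) = fun y => Tmul A φ (magD A k u) y + commDT A φ k u y :=
      funext fun y => magD_Tmul hA hφ (hu.of_le (by norm_num)) k y
    rw [this, magD_add (hT k) (hG k), magD_Tmul hA hφ (hD k)]
    ring
  simp only [key, Finset.sum_add_distrib]
  ring

/-- The commutator with its principal part in divergence form. -/
lemma commutator_div {A : (𝔼 n) → 𝔼 n} {φ V : (𝔼 n) → ℝ} {u : (𝔼 n) → ℂ} (hA : ContDiff ℝ 2 A)
    (hV : ContDiff ℝ 1 V) (hφ : ContDiff ℝ 4 φ) (hu : ContDiff ℝ 3 u) (x : 𝔼 n) :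
    Hop A V (Tmul A φ u) x - Tmul A φ (Hop A V u) x
      = -4 * (∑ j, ∑ k, magD A k (fun y => (pdR (pdR φ k) j y : ℂ) * magD A j u y) x)
        + 2 * Complex.I * (∑ j, ∑ k,
          magD A k (fun y => ((pdR φ j y * Bfield A j k y : ℝ) : ℂ) * u y) x)
        + 2 * Complex.I * (∑ j, ∑ k, ((pdR φ j x * Bfield A j k x : ℝ) : ℂ) * magD A k u x)
        - (lap (lap φ) x : ℂ) * u x
        - 2 * ((∑ k, pdR φ k x * pdR V k x : ℝ) : ℂ) * u x := by
  have hA1 : ContDiff ℝ 1 A := hA.of_le (by norm_num)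
  have hu1 : ContDiff ℝ 1 u := hu.of_le (by norm_num)
  have hD : ∀ j, ContDiff ℝ 1 (magD A j u) := fun j =>
    contDiff_magD hA1 hu (by norm_num) j
  have hp2 : ∀ j k, ContDiff ℝ 1 (pdR (pdR φ j) k) := fun j k =>
    (contDiff_pdR (contDiff_pdR (m := 3) hφ (by norm_num) j) (by norm_num) k)
  have hpB : ∀ j k, ContDiff ℝ 1 (fun y => pdR φ j y * Bfield A k j y) := fun j k =>
    (contDiff_pdR hφ (by norm_num) j).mul (contDiff_Bfield hA (by norm_num) k j)
  have hl : ∀ k, ContDiff ℝ 1 (pdR (lap φ) k) := fun k =>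
    contDiff_pdR (contDiff_lap (m := 2) hφ (by norm_num)) (by norm_num) k
  have hs : ∀ j k, pdR (pdR φ k) j = pdR (pdR φ j) k := fun j k =>
    funext fun y => pdR_comm (hφ.of_le (by norm_num)) j k y
  have hBs : ∀ j k, Bfield A k j = fun y => -Bfield A j k y := fun j k => by
    funext y; simp only [Bfield]; ring
  -- Only the zeroth-order term `(∂_kΔφ) u` is expanded; the others stay in divergence form.
  have h1 : ∀ k, magD A k (commDT A φ k u) x
      = 2 * ∑ j, magD A k (fun y => (pdR (pdR φ k) j y : ℂ) * magD A j u y) x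
        - 2 * Complex.I * ∑ j,
          magD A k (fun y => ((pdR φ j y * Bfield A j k y : ℝ) : ℂ) * u y) x
        + ((pdR (pdR (lap φ) k) k x : ℂ) * u x + (pdR (lap φ) k x : ℂ) * magD A k u x) := by
    intro k
    have c1 : ∀ j, ContDiff ℝ 1 (fun y => (pdR (pdR φ j) k y : ℂ) * magD A j u y) := fun j =>
      (contDiff_coe (hp2 j k)).mul (hD j)
    have c2 : ∀ j, ContDiff ℝ 1 (fun y => ((pdR φ j y * Bfield A k j y : ℝ) : ℂ) * u y) :=
      fun j => (contDiff_coe (hpB j k)).mul hu1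
    have s1 := ContDiff.sum fun j (_ : j ∈ Finset.univ) => c1 j
    have s2 := ContDiff.sum fun j (_ : j ∈ Finset.univ) => c2 j
    have hG : commDT A φ k u = fun y => (2 * (∑ j, (pdR (pdR φ j) k y : ℂ) * magD A j u y)
      + 2 * Complex.I * ∑ j, ((pdR φ j y * Bfield A k j y : ℝ) : ℂ) * u y)
      + (pdR (lap φ) k y : ℂ) * u y := rfl
    have hneg : ∀ j, magD A k (fun y => ((pdR φ j y * Bfield A k j y : ℝ) : ℂ) * u y) x
        = -magD A k (fun y => ((pdR φ j y * Bfield A j k y : ℝ) : ℂ) * u y) x := by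
      intro j
      have := magD_const_mul (A := A) ((contDiff_coe (hpB j k)).mul hu1) (-1) k x
      simp only [neg_mul, one_mul] at this
      rw [← neg_eq_iff_eq_neg, ← this, hBs j k]
      congr 1; funext y; push_cast; ring
    rw [hG, magD_add ((contDiff_const.mul s1).add (contDiff_const.mul s2))
        ((contDiff_coe (hl k)).mul hu1),
      magD_add (contDiff_const.mul s1) (contDiff_const.mul s2), magD_const_mul s1,
      magD_const_mul s2, magD_sum c1, magD_sum c2, magD_coe_mul (hl k) hu1]
    simp only [hneg, Finset.sum_neg_distrib, hs k]
    ring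
  -- Pulling `∂_j∂_kφ` under `D_j` costs `2 (∂_kΔφ) D_k u`, which flips the sign of the last term.
  have h2 : ∀ k, commDT A φ k (magD A k u) x
      = 2 * ∑ j, magD A j (fun y => (pdR (pdR φ j) k y : ℂ) * magD A k u y) x
        - 2 * Complex.I * ∑ j, ((pdR φ j x * Bfield A j k x : ℝ) : ℂ) * magD A k u x
        - (pdR (lap φ) k x : ℂ) * magD A k u x := by
    intro k
    have : ∀ j, magD A j (fun y => (pdR (pdR φ j) k y : ℂ) * magD A k u y) x
        = (pdR (pdR (pdR φ k) j) j x : ℂ) * magD A k u x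
          + (pdR (pdR φ j) k x : ℂ) * magD A j (magD A k u) x := by
      intro j
      rw [magD_coe_mul (hp2 j k) (hD k), hs k j]
    have hneg : ∀ j, ((pdR φ j x * Bfield A k j x : ℝ) : ℂ) * magD A k u x
        = -(((pdR φ j x * Bfield A j k x : ℝ) : ℂ) * magD A k u x) := by
      intro j; rw [hBs j k]; push_cast; ring
    simp only [commDT, this, hneg, Finset.sum_neg_distrib, Finset.sum_add_distrib,
      ← Finset.sum_mul, pdR_lap hφ k x]
    push_cast
    ring
  have hll : lap (lap φ) x = ∑ k, pdR (pdR (lap φ) k) k x := rfl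
  rw [commutator_eq hA hV hφ hu, hll]
  simp only [h1, h2, Finset.sum_add_distrib, Finset.sum_sub_distrib, ← Finset.mul_sum]
  rw [Finset.sum_comm (f := fun k j =>
      magD A k (fun y => (pdR (pdR φ k) j y : ℂ) * magD A j u y) x),
    Finset.sum_comm (f := fun k j =>
      magD A k (fun y => ((pdR φ j y * Bfield A j k y : ℝ) : ℂ) * u y) x),
    Finset.sum_comm (f := fun k j =>
      ((pdR φ j x * Bfield A j k x : ℝ) : ℂ) * magD A k u x)]
  simp only [Complex.ofReal_sum, Finset.sum_mul]
  ring

/-! ### Integration by parts -/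

lemma continuous_magD {A : (𝔼 n) → 𝔼 n} {w : (𝔼 n) → ℂ} (hA : Continuous A)
    (hw : ContDiff ℝ 1 w) (k : Fin n) : Continuous (magD A k w) :=
  (contDiff_magD (m := 0) (contDiff_zero.2 hA) hw (by norm_num) k).continuous

lemma hasCompactSupport_conj {u : (𝔼 n) → ℂ} (hcs : HasCompactSupport u) :
    HasCompactSupport (fun x => (starRingEnd ℂ) (u x)) :=
  hcs.comp_left (g := starRingEnd ℂ) (map_zero _)

lemma integrable_conj_mul {u g : (𝔼 n) → ℂ} (hu : Continuous u) (hcs : HasCompactSupport u)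
    (hg : Continuous g) : Integrable (fun x => (starRingEnd ℂ) (u x) * g x) :=
  ((Complex.continuous_conj.comp hu).mul hg).integrable_of_hasCompactSupport
    ((hasCompactSupport_conj hcs).mul_right)

lemma hasCompactSupport_magD {A : (𝔼 n) → 𝔼 n} {u : (𝔼 n) → ℂ} (hcs : HasCompactSupport u)
    (k : Fin n) : HasCompactSupport (magD A k u) :=
  (hcs.fderiv_apply ℝ _).sub hcs.mul_left

/-- `-D_k` is the formal adjoint of `D_k`, since `A` is real-valued. -/
lemma magD_ibp {A : (𝔼 n) → 𝔼 n} {u w : (𝔼 n) → ℂ} (hA : Continuous A)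
    (hu : ContDiff ℝ 1 u) (hcs : HasCompactSupport u) (hw : ContDiff ℝ 1 w) (k : Fin n) :
    ∫ x, (starRingEnd ℂ) (u x) * magD A k w x
      = -∫ x, (starRingEnd ℂ) (magD A k u x) * w x := by
  set e : 𝔼 n := EuclideanSpace.single k 1 with he
  have hAk : Continuous (fun x => Complex.I * (A x k : ℂ)) :=
    continuous_const.mul (contDiff_coe (contDiff_coord (contDiff_zero.2 hA) k)).continuous
  have hdw : Continuous (fun x => fderiv ℝ w x e) :=
    (hw.continuous_fderiv one_ne_zero).clm_apply continuous_const
  have hdu : Continuous (fun x => fderiv ℝ u x e) :=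
    (hu.continuous_fderiv one_ne_zero).clm_apply continuous_const
  have hconj : ∀ x, HasFDerivAt (fun x => (starRingEnd ℂ) (u x))
      ((Complex.conjCLE : ℂ →L[ℝ] ℂ).comp (fderiv ℝ u x)) x := fun x =>
    (Complex.conjCLE : ℂ →L[ℝ] ℂ).hasFDerivAt.comp x
      (hu.differentiable one_ne_zero x).hasFDerivAt
  have hfd : ∀ x, fderiv ℝ (fun x => (starRingEnd ℂ) (u x)) x e
      = (starRingEnd ℂ) (fderiv ℝ u x e) := fun x => by rw [(hconj x).fderiv]; simp
  have i1 : Integrable (fun x => (starRingEnd ℂ) (fderiv ℝ u x e) * w x) :=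
    integrable_conj_mul hdu (hcs.fderiv_apply ℝ e) hw.continuous
  have i2 : Integrable (fun x => (starRingEnd ℂ) (u x) * fderiv ℝ w x e) :=
    integrable_conj_mul hu.continuous hcs hdw
  have i3 : Integrable (fun x => (starRingEnd ℂ) (u x) * (Complex.I * (A x k : ℂ) * w x)) :=
    integrable_conj_mul hu.continuous hcs (hAk.mul hw.continuous)
  have ibp := integral_mul_fderiv_eq_neg_fderiv_mul_of_integrable (μ := volume) (v := e)
    (f := fun x => (starRingEnd ℂ) (u x)) (g := w) (by simpa only [hfd] using i1) i2
    (integrable_conj_mul hu.continuous hcs hw.continuous)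
    (fun x _ => (hconj x).differentiableAt) (fun x _ => hw.differentiable one_ne_zero x)
  simp only [hfd] at ibp
  have l : ∀ x, (starRingEnd ℂ) (u x) * magD A k w x
      = (starRingEnd ℂ) (u x) * fderiv ℝ w x e
        - (starRingEnd ℂ) (u x) * (Complex.I * (A x k : ℂ) * w x) := fun x => by
    simp only [magD, mul_sub, he]
  have r : ∀ x, (starRingEnd ℂ) (magD A k u x) * w x
      = (starRingEnd ℂ) (fderiv ℝ u x e) * w x
        + (starRingEnd ℂ) (u x) * (Complex.I * (A x k : ℂ) * w x) := fun x => by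
    simp only [magD, map_sub, map_mul, Complex.conj_I, Complex.conj_ofReal, he]; ring
  simp only [l, r]
  rw [integral_sub i2 i3, integral_add i1 i3, ibp]
  ring

lemma magD_ibp_sum {A : (𝔼 n) → 𝔼 n} {u : (𝔼 n) → ℂ} {W : Fin n → Fin n → (𝔼 n) → ℂ}
    (hA : Continuous A) (hu : ContDiff ℝ 1 u) (hcs : HasCompactSupport u)
    (hW : ∀ j k, ContDiff ℝ 1 (W j k)) :
    ∫ x, (starRingEnd ℂ) (u x) * ∑ j, ∑ k, magD A k (W j k) x
      = -∫ x, ∑ j, ∑ k, W j k x * (starRingEnd ℂ) (magD A k u x) := by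
  have i1 : ∀ j k, Integrable (fun x => (starRingEnd ℂ) (u x) * magD A k (W j k) x) :=
    fun j k => integrable_conj_mul hu.continuous hcs (continuous_magD hA (hW j k) k)
  have i2 : ∀ j k, Integrable (fun x => W j k x * (starRingEnd ℂ) (magD A k u x)) :=
    fun j k => by
      simpa only [mul_comm] using integrable_conj_mul (continuous_magD hA hu k)
        (hasCompactSupport_magD hcs k) (hW j k).continuous
  simp only [Finset.mul_sum]
  rw [integral_finsetSum _ fun j _ => integrable_finsetSum _ fun k _ => i1 j k,
    integral_finsetSum _ fun j _ => integrable_finsetSum _ fun k _ => i2 j k,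
    ← Finset.sum_neg_distrib]
  refine Finset.sum_congr rfl fun j _ => ?_
  rw [integral_finsetSum _ fun k _ => i1 j k, integral_finsetSum _ fun k _ => i2 j k,
    ← Finset.sum_neg_distrib]
  refine Finset.sum_congr rfl fun k _ => ?_
  rw [magD_ibp hA hu hcs (hW j k)]
  simp only [mul_comm]

lemma integral_lincomb {f₁ f₂ f₃ f₄ f₅ : (𝔼 n) → ℂ} (a b c d : ℂ) (i₁ : Integrable f₁)
    (i₂ : Integrable f₂) (i₃ : Integrable f₃) (i₄ : Integrable f₄) (i₅ : Integrable f₅) :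
    ∫ x, (a * f₁ x + b * f₂ x + c * f₃ x - f₄ x - d * f₅ x)
      = a * (∫ x, f₁ x) + b * (∫ x, f₂ x) + c * (∫ x, f₃ x) - (∫ x, f₄ x) - d * ∫ x, f₅ x := by
  have h₂ : Integrable (fun x => a * f₁ x + b * f₂ x) := (i₁.const_mul a).add (i₂.const_mul b)
  have h₃ : Integrable (fun x => a * f₁ x + b * f₂ x + c * f₃ x) := h₂.add (i₃.const_mul c)
  have h₄ : Integrable (fun x => a * f₁ x + b * f₂ x + c * f₃ x - f₄ x) := h₃.sub i₄
  rw [integral_sub h₄ (i₅.const_mul d), integral_sub h₃ i₄, integral_add h₂ (i₃.const_mul c),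
    integral_add (i₁.const_mul a) (i₂.const_mul b)]
  simp only [integral_const_mul]

end Calculus

/-- Integral commutator identity, the key step of the magnetic virial identity:
`∫ conj u · ([H,T]u) = 4∫ ∇_A u D²φ conj(∇_A u) - ∫ |u|²Δ²φ - 2∫ |u|²∇φ·∇V
  + 4 Im ∫ u ∇φ·B·conj(∇_A u)`. -/
theorem integral_commutator_identity (n : ℕ) (hn : 3 ≤ n)
    (A : EuclideanSpace ℝ (Fin n) → EuclideanSpace ℝ (Fin n)) (hA : ContDiff ℝ 2 A)
    (V : EuclideanSpace ℝ (Fin n) → ℝ) (hV : ContDiff ℝ 1 V)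
    (φ : EuclideanSpace ℝ (Fin n) → ℝ) (hφ : ContDiff ℝ 4 φ)
    (hrad : ∀ x y : EuclideanSpace ℝ (Fin n), ‖x‖ = ‖y‖ → φ x = φ y)
    (u : EuclideanSpace ℝ (Fin n) → ℂ) (hu : ContDiff ℝ (⊤ : ℕ∞) u) (hcs : HasCompactSupport u) :
    ∫ x : EuclideanSpace ℝ (Fin n),
        (starRingEnd ℂ) (u x) * (Hop A V (Tmul A φ u) x - Tmul A φ (Hop A V u) x)
      = 4 * (∫ x : EuclideanSpace ℝ (Fin n),
              ∑ j, ∑ k, (pdR (pdR φ k) j x : ℂ) * magD A j u x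
                * (starRingEnd ℂ) (magD A k u x))
        - ((∫ x : EuclideanSpace ℝ (Fin n), ‖u x‖ ^ 2 * lap (lap φ) x : ℝ) : ℂ)
        - 2 * ((∫ x : EuclideanSpace ℝ (Fin n),
                ‖u x‖ ^ 2 * ∑ k, pdR φ k x * pdR V k x : ℝ) : ℂ)
        + 4 * (((∫ x : EuclideanSpace ℝ (Fin n),
                u x * ∑ j, ∑ k, (pdR φ j x : ℂ) * (Bfield A j k x : ℂ)
                  * (starRingEnd ℂ) (magD A k u x)).im : ℝ) : ℂ) := by
  have hA1 : ContDiff ℝ 1 A := hA.of_le (by norm_num)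
  have hu1 : ContDiff ℝ 1 u := hu.of_le (by exact_mod_cast le_top)
  have hu3 : ContDiff ℝ 3 u := (contDiff_infty.1 hu) 3
  have hD : ∀ j, ContDiff ℝ 1 (magD A j u) := fun j => contDiff_magD hA1 hu3 (by norm_num) j
  have hp2 : ∀ j k, ContDiff ℝ 1 (pdR (pdR φ k) j) := fun j k =>
    contDiff_pdR (contDiff_pdR (m := 3) hφ (by norm_num) k) (by norm_num) j
  have hpB : ∀ j k, ContDiff ℝ 1 (fun y => pdR φ j y * Bfield A j k y) := fun j k =>
    (contDiff_pdR hφ (by norm_num) j).mul (contDiff_Bfield hA (by norm_num) j k)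
  have hW : ∀ j k, ContDiff ℝ 1 (fun y => (pdR (pdR φ k) j y : ℂ) * magD A j u y) :=
    fun j k => (contDiff_coe (hp2 j k)).mul (hD j)
  have hY : ∀ j k, ContDiff ℝ 1 (fun y => ((pdR φ j y * Bfield A j k y : ℝ) : ℂ) * u y) :=
    fun j k => (contDiff_coe (hpB j k)).mul hu1
  have hVc : Continuous fun x => ((∑ k, pdR φ k x * pdR V k x : ℝ) : ℂ) * u x :=
    (Complex.continuous_ofReal.comp (continuous_finsetSum _ fun k _ =>
      (contDiff_pdR (m := 3) hφ (by norm_num) k).continuous.mul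
        (contDiff_pdR (m := 0) hV (by norm_num) k).continuous)).mul hu.continuous
  have hLc : Continuous fun x => (lap (lap φ) x : ℂ) * u x :=
    (contDiff_coe (contDiff_lap (m := 0) (contDiff_lap (m := 2) hφ (by norm_num))
      (by norm_num))).continuous.mul hu.continuous
  have i1 := integrable_conj_mul hu.continuous hcs (continuous_finsetSum Finset.univ fun j _ =>
    continuous_finsetSum Finset.univ fun k _ => continuous_magD hA.continuous (hW j k) k)
  have i2 := integrable_conj_mul hu.continuous hcs (continuous_finsetSum Finset.univ fun j _ =>
    continuous_finsetSum Finset.univ fun k _ => continuous_magD hA.continuous (hY j k) k)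
  have i3 : Integrable fun x => (starRingEnd ℂ) (u x) * ∑ j, ∑ k,
      ((pdR φ j x * Bfield A j k x : ℝ) : ℂ) * magD A k u x :=
    integrable_conj_mul hu.continuous hcs (continuous_finsetSum Finset.univ fun j _ =>
      continuous_finsetSum Finset.univ fun k _ =>
      (contDiff_coe (hpB j k)).continuous.mul (hD k).continuous)
  have i4 := integrable_conj_mul hu.continuous hcs hLc
  have i5 := integrable_conj_mul hu.continuous hcs hVc
  have hsplit : ∀ x, (starRingEnd ℂ) (u x) * (Hop A V (Tmul A φ u) x - Tmul A φ (Hop A V u) x)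
      = -4 * ((starRingEnd ℂ) (u x) * ∑ j, ∑ k,
            magD A k (fun y => (pdR (pdR φ k) j y : ℂ) * magD A j u y) x)
        + 2 * Complex.I * ((starRingEnd ℂ) (u x) * ∑ j, ∑ k,
            magD A k (fun y => ((pdR φ j y * Bfield A j k y : ℝ) : ℂ) * u y) x)
        + 2 * Complex.I * ((starRingEnd ℂ) (u x) * ∑ j, ∑ k,
            ((pdR φ j x * Bfield A j k x : ℝ) : ℂ) * magD A k u x)
        - (starRingEnd ℂ) (u x) * ((lap (lap φ) x : ℂ) * u x)
        - 2 * ((starRingEnd ℂ) (u x) *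
            (((∑ k, pdR φ k x * pdR V k x : ℝ) : ℂ) * u x)) := by
    intro x
    rw [commutator_div hA hV hφ hu3]
    ring
  simp only [hsplit]
  rw [integral_lincomb _ _ _ _ i1 i2 i3 i4 i5]
  rw [magD_ibp_sum hA.continuous hu1 hcs hW, magD_ibp_sum hA.continuous hu1 hcs hY]
  -- The two field terms are the integral `z` of `u ∇φ·B·conj(∇_A u)` and its conjugate.
  have hz : ∫ x, ∑ j, ∑ k, ((pdR φ j x * Bfield A j k x : ℝ) : ℂ) * u x
        * (starRingEnd ℂ) (magD A k u x)
      = ∫ x, u x * ∑ j, ∑ k, (pdR φ j x : ℂ) * (Bfield A j k x : ℂ)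
        * (starRingEnd ℂ) (magD A k u x) := by
    congr 1; funext x
    simp only [Finset.mul_sum]
    refine Finset.sum_congr rfl fun j _ => Finset.sum_congr rfl fun k _ => ?_
    push_cast; ring
  have hzc : ∫ x, (starRingEnd ℂ) (u x) * ∑ j, ∑ k,
        ((pdR φ j x * Bfield A j k x : ℝ) : ℂ) * magD A k u x
      = (starRingEnd ℂ) (∫ x, u x * ∑ j, ∑ k, (pdR φ j x : ℂ) * (Bfield A j k x : ℂ)
        * (starRingEnd ℂ) (magD A k u x)) := by
    rw [← integral_conj]
    congr 1; funext x
    simp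
  have hL : ∫ x, (starRingEnd ℂ) (u x) * ((lap (lap φ) x : ℂ) * u x)
      = ((∫ x, ‖u x‖ ^ 2 * lap (lap φ) x : ℝ) : ℂ) := by
    rw [← integral_complex_ofReal]
    congr 1; funext x
    push_cast
    rw [← Complex.conj_mul']
    ring
  have hVi : ∫ x, (starRingEnd ℂ) (u x) * (((∑ k, pdR φ k x * pdR V k x : ℝ) : ℂ) * u x)
      = ((∫ x, ‖u x‖ ^ 2 * ∑ k, pdR φ k x * pdR V k x : ℝ) : ℂ) := by
    rw [← integral_complex_ofReal]
    congr 1; funext x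
    rw [Complex.ofReal_mul, Complex.ofReal_pow, ← Complex.conj_mul']
    ring
  rw [hz, hzc, hL, hVi]
  generalize (∫ x, u x * ∑ j, ∑ k, (pdR φ j x : ℂ) * (Bfield A j k x : ℂ)
    * (starRingEnd ℂ) (magD A k u x)) = z
  have him : 2 * Complex.I * -z + 2 * Complex.I * (starRingEnd ℂ) z = 4 * (z.im : ℂ) := by
    apply Complex.ext <;> simp <;> ring
  linear_combination him
end
end

section
/- Lower and upper bounds for the scaled multiplier: Let n ≥ 3, M ≥ 1, R > 0, and set φ_R'(r) = φ₀'(r/R) and φ_R''(r) = (1/R)·φ₀''(r/R). Then for every r > 0: (i) φ_R'(r)/r ≥ M/r + ((n−1)/(2n(n+2)))·min(1/R, R^{n−1}/rⁿ); (ii) φ_R''(r) ≥ ((n−1)/(2n(n+2)))·min(1/R, R^{n−1}/rⁿ); (iii) sup_{r≥0} φ_R'(r) = M + 1/(2n) and sup_{r≥0} φ_R''(r) = 1/(2nR); (iv) for every x ≠ 0, |Δφ_R(x)| ≤ M(n−1)/|x| + 1/(2·max(|x|, R)). -/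
/-!
Write `s = r / R`. The two branches of `φ₀'` and of its derivative agree at `s = 1`, so `φ₀'` is
`C¹` with `φ₀''(s) = 1/(2n) - 3s²/(2n(n+2))` for `s ≤ 1` and `(n-1)/(2n(n+2)sⁿ)` for `s > 1`
(`hasDerivAt_gmult`). The lower bounds and the suprema are then elementary estimates on each branch;
the supremum of `φ₀'` is approached as `s → ∞`, that of `φ₀''` is attained at `s = 0`.

For the Laplacian, `Δφ_R = φ_R'' + (n-1) φ_R' / r` away from the origin (`lap_phiR`). For `s ≤ 1`
this equals `M(n-1)/r + (1 - s²/n)/(2R)`. For `s > 1` the terms in `s^{-n}` cancel, leaving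
`M(n-1)/r + (n-1)/(2nr)`. Both are nonnegative and below the claimed bound.
-/

open MeasureTheory
open scoped BigOperators

noncomputable section

/-- The derivative `φ₀'` of the basic radial multiplier. -/
noncomputable def gmult (n : ℕ) (M : ℝ) (r : ℝ) : ℝ :=
  if r ≤ 1 then M + r / (2 * n) - r ^ 3 / (2 * n * (n + 2))
  else M + 1 / (2 * n) - 1 / (2 * n * (n + 2) * r ^ (n - 1))

/-- The basic radial multiplier `φ₀(r) = ∫₀ʳ φ₀'(s) ds`. -/
noncomputable def phi0 (n : ℕ) (M : ℝ) (r : ℝ) : ℝ :=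
  ∫ s in (0:ℝ)..r, gmult n M s

/-- The scaled multiplier `φ_R(x) = R φ₀(|x|/R)`. -/
noncomputable def phiR (n : ℕ) (M R : ℝ) (x : EuclideanSpace ℝ (Fin n)) : ℝ :=
  R * phi0 n M (‖x‖ / R)

/-- The second derivative `φ₀''` of the basic radial multiplier, in closed form. -/
def gmultD (n : ℕ) (s : ℝ) : ℝ :=
  if s ≤ 1 then 1 / (2 * n) - 3 * s ^ 2 / (2 * n * (n + 2))
  else ((n : ℝ) - 1) / (2 * n * (n + 2)) * (1 / s ^ n)

/-- The outer formula for `φ₀'` is also valid at the interface `r = 1`. -/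
lemma gmult_of_one_le (n : ℕ) (M : ℝ) {r : ℝ} (hr : 1 ≤ r) :
    gmult n M r = M + 1 / (2 * n) - 1 / (2 * n * (n + 2) * r ^ (n - 1)) := by
  rcases hr.eq_or_lt with rfl | h
  · simp [gmult]
  · simp [gmult, not_le.2 h]

lemma gmultD_of_one_le {n : ℕ} (hn : 1 ≤ n) {r : ℝ} (hr : 1 ≤ r) :
    gmultD n r = ((n : ℝ) - 1) / (2 * n * (n + 2)) * (1 / r ^ n) := by
  rcases hr.eq_or_lt with rfl | h
  · have : (0 : ℝ) < n := by exact_mod_cast hn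
    simp only [gmultD, le_refl, if_true, one_pow]
    field_simp
    ring
  · simp [gmultD, not_le.2 h]

lemma hasDerivAt_inner_branch (n : ℕ) (M s : ℝ) :
    HasDerivAt (fun r : ℝ => M + r / (2 * n) - r ^ 3 / (2 * n * (n + 2)))
      (1 / (2 * n) - 3 * s ^ 2 / (2 * n * (n + 2))) s := by
  have h := (((hasDerivAt_id s).div_const (2 * (n : ℝ))).const_add M).sub
    ((hasDerivAt_pow 3 s).div_const (2 * (n : ℝ) * (n + 2)))
  convert! h using 1

lemma hasDerivAt_outer_branch {n : ℕ} (hn : 1 ≤ n) (M : ℝ) {s : ℝ} (hs : 0 < s) :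
    HasDerivAt (fun r : ℝ => M + 1 / (2 * n) - 1 / (2 * n * (n + 2) * r ^ (n - 1)))
      (((n : ℝ) - 1) / (2 * n * (n + 2)) * (1 / s ^ n)) s := by
  obtain ⟨m, rfl⟩ : ∃ m, n = m + 1 := ⟨n - 1, by omega⟩
  have hm : (0 : ℝ) < ((m + 1 : ℕ) : ℝ) := by positivity
  have h := ((hasDerivAt_const s (1 : ℝ)).div
    ((hasDerivAt_pow m s).const_mul (2 * ((m + 1 : ℕ) : ℝ) * ((m + 1 : ℕ) + 2)))
    (by positivity)).const_sub (M + 1 / (2 * ((m + 1 : ℕ) : ℝ)))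
  simp only [Nat.add_sub_cancel]
  convert! h using 1
  rcases m with _ | k
  · simp
  · simp only [Nat.add_sub_cancel]
    push_cast at hm ⊢
    field_simp
    ring

lemma hasDerivAt_gmult {n : ℕ} (hn : 1 ≤ n) (M s : ℝ) :
    HasDerivAt (gmult n M) (gmultD n s) s := by
  have hin : s ≤ 1 → HasDerivWithinAt (gmult n M) (gmultD n s) (Set.Iic 1) s := by
    intro hs
    have hD : gmultD n s = 1 / (2 * n) - 3 * s ^ 2 / (2 * n * (n + 2)) := by simp [gmultD, hs]
    rw [hD]
    refine (hasDerivAt_inner_branch n M s).hasDerivWithinAt.congr (fun y hy => ?_) ?_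
    · simp [gmult, Set.mem_Iic.1 hy]
    · simp [gmult, hs]
  have hout : 1 ≤ s → HasDerivWithinAt (gmult n M) (gmultD n s) (Set.Ici 1) s := by
    intro hs
    rw [gmultD_of_one_le hn hs]
    exact (hasDerivAt_outer_branch hn M (by linarith)).hasDerivWithinAt.congr
      (fun y hy => gmult_of_one_le n M hy) (gmult_of_one_le n M hs)
  rcases lt_trichotomy s 1 with h | h | h
  · exact (hin h.le).hasDerivAt (Iic_mem_nhds h)
  · have := (hin h.le).union (hout h.ge)
    rwa [Set.Iic_union_Ici, hasDerivWithinAt_univ] at this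
  · exact (hout h.le).hasDerivAt (Ici_mem_nhds h)

lemma hasDerivAt_phi0 {n : ℕ} (hn : 1 ≤ n) (M s : ℝ) :
    HasDerivAt (phi0 n M) (gmult n M s) s := by
  have hc : Continuous (gmult n M) :=
    continuous_iff_continuousAt.2 fun t => (hasDerivAt_gmult hn M t).continuousAt
  exact (hc.integral_hasStrictDerivAt 0 s).hasDerivAt

lemma hasFDerivAt_norm_euclidean {n : ℕ} {x : EuclideanSpace ℝ (Fin n)} (hx : x ≠ 0) :
    HasFDerivAt (fun y : EuclideanSpace ℝ (Fin n) => ‖y‖) ((1 / ‖x‖) • innerSL ℝ x) x := by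
  have hx' : ‖x‖ ≠ 0 := norm_ne_zero_iff.2 hx
  have h := (hasStrictFDerivAt_norm_sq x).hasFDerivAt.sqrt (by positivity)
  have e : (fun y : EuclideanSpace ℝ (Fin n) => √(‖y‖ ^ 2)) = fun y => ‖y‖ := by
    funext y
    exact Real.sqrt_sq (norm_nonneg y)
  rw [e, Real.sqrt_sq (norm_nonneg x)] at h
  convert! h using 1
  ext v
  simp
  field_simp

lemma pdR_phiR {n : ℕ} (hn : 1 ≤ n) (M : ℝ) {R : ℝ} (hR : 0 < R) (k : Fin n)
    {x : EuclideanSpace ℝ (Fin n)} (hx : x ≠ 0) :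
    pdR (phiR n M R) k x = gmult n M (‖x‖ / R) / ‖x‖ * x k := by
  have h1 : HasDerivAt (fun t : ℝ => R * phi0 n M (t / R)) (gmult n M (‖x‖ / R)) ‖x‖ := by
    have := (((hasDerivAt_phi0 hn M (‖x‖ / R)).comp ‖x‖
      ((hasDerivAt_id ‖x‖).div_const R)).const_mul R)
    convert! this using 1
    field_simp
  have h2 : HasFDerivAt (phiR n M R) _ x := h1.comp_hasFDerivAt x (hasFDerivAt_norm_euclidean hx)
  rw [pdR, h2.fderiv]
  simp [EuclideanSpace.inner_single_right]
  ring

lemma pdR_pdR_phiR {n : ℕ} (hn : 1 ≤ n) (M : ℝ) {R : ℝ} (hR : 0 < R) (k : Fin n)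
    {x : EuclideanSpace ℝ (Fin n)} (hx : x ≠ 0) :
    pdR (pdR (phiR n M R) k) k x =
      (gmultD n (‖x‖ / R) / R / ‖x‖ - gmult n M (‖x‖ / R) / ‖x‖ ^ 2) / ‖x‖ * x k ^ 2
        + gmult n M (‖x‖ / R) / ‖x‖ := by
  have hx' : ‖x‖ ≠ 0 := norm_ne_zero_iff.2 hx
  have h1 : HasDerivAt (fun t : ℝ => gmult n M (t / R) / t)
      (gmultD n (‖x‖ / R) / R / ‖x‖ - gmult n M (‖x‖ / R) / ‖x‖ ^ 2) ‖x‖ := by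
    have := ((hasDerivAt_gmult hn M (‖x‖ / R)).comp ‖x‖
      ((hasDerivAt_id ‖x‖).div_const R)).div (hasDerivAt_id ‖x‖) hx'
    convert! this using 1
    simp
    field_simp
  have h2 := (h1.comp_hasFDerivAt x (hasFDerivAt_norm_euclidean hx)).mul
    (EuclideanSpace.proj (𝕜 := ℝ) k : EuclideanSpace ℝ (Fin n) →L[ℝ] ℝ).hasFDerivAt
  have h3 : pdR (phiR n M R) k =ᶠ[nhds x] ((fun t : ℝ => gmult n M (t / R) / t) ∘ fun y => ‖y‖) *
      ⇑(EuclideanSpace.proj (𝕜 := ℝ) k : EuclideanSpace ℝ (Fin n) →L[ℝ] ℝ) := by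
    filter_upwards [isOpen_ne.mem_nhds hx] with y hy
    simpa using pdR_phiR hn M hR k hy
  rw [pdR, h3.fderiv_eq, h2.fderiv]
  simp [EuclideanSpace.inner_single_right]
  ring

/-- The radial Laplacian formula `Δφ_R = φ_R'' + (n-1) φ_R' / r`. -/
lemma lap_phiR {n : ℕ} (hn : 1 ≤ n) (M : ℝ) {R : ℝ} (hR : 0 < R)
    {x : EuclideanSpace ℝ (Fin n)} (hx : x ≠ 0) :
    lap (phiR n M R) x =
      gmultD n (‖x‖ / R) / R + ((n : ℝ) - 1) * (gmult n M (‖x‖ / R) / ‖x‖) := by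
  have hx' : ‖x‖ ≠ 0 := norm_ne_zero_iff.2 hx
  rw [lap, Finset.sum_congr rfl fun k _ => pdR_pdR_phiR hn M hR k hx, Finset.sum_add_distrib,
    ← Finset.mul_sum, ← EuclideanSpace.real_norm_sq_eq]
  simp
  field_simp
  ring

/-- The algebraic core of the Laplacian bound, at `r = s * R`. -/
lemma lap_bound_radial {n : ℕ} (hn : 3 ≤ n) {M : ℝ} (hM : 1 ≤ M) {R s : ℝ} (hR : 0 < R)
    (hs : 0 < s) :
    |gmultD n s / R + ((n : ℝ) - 1) * (gmult n M s / (s * R))| ≤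
      M * ((n : ℝ) - 1) / (s * R) + 1 / (2 * max (s * R) R) := by
  have hn' : (3 : ℝ) ≤ n := by exact_mod_cast hn
  have hA : 0 ≤ M * ((n : ℝ) - 1) / (s * R) := by
    have : (0 : ℝ) ≤ n - 1 := by linarith
    positivity
  rcases le_or_gt s 1 with h | h
  · have e : gmultD n s / R + ((n : ℝ) - 1) * (gmult n M s / (s * R)) =
        M * ((n : ℝ) - 1) / (s * R) + (1 - s ^ 2 / n) / (2 * R) := by
      simp only [gmultD, gmult, h, if_true]
      field_simp
      ring
    have hmax : max (s * R) R = R := max_eq_right (by nlinarith)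
    have hq0 : 0 ≤ s ^ 2 / (n : ℝ) := by positivity
    have hq1 : s ^ 2 / (n : ℝ) ≤ 1 := (div_le_one (by positivity)).2 (by nlinarith)
    have hB : 0 ≤ (1 - s ^ 2 / n) / (2 * R) := div_nonneg (by linarith) (by positivity)
    rw [e, hmax, abs_of_nonneg (by linarith)]
    gcongr
    linarith
  · obtain ⟨m, rfl⟩ : ∃ m, n = m + 1 := ⟨n - 1, by omega⟩
    have e : gmultD (m + 1) s / R + (((m + 1 : ℕ) : ℝ) - 1) * (gmult (m + 1) M s / (s * R)) =
        M * (((m + 1 : ℕ) : ℝ) - 1) / (s * R)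
          + (((m + 1 : ℕ) : ℝ) - 1) / ((m + 1 : ℕ) : ℝ) * (1 / (2 * (s * R))) := by
      rw [gmultD_of_one_le (by omega) h.le, gmult_of_one_le _ _ h.le, Nat.add_sub_cancel]
      field_simp
      ring
    have hmax : max (s * R) R = s * R := max_eq_left (by nlinarith)
    have hq : (((m + 1 : ℕ) : ℝ) - 1) / ((m + 1 : ℕ) : ℝ) ≤ 1 :=
      (div_le_one (by linarith)).2 (by linarith)
    have hq0 : 0 ≤ (((m + 1 : ℕ) : ℝ) - 1) / ((m + 1 : ℕ) : ℝ) :=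
      div_nonneg (by linarith) (by linarith)
    have hC : 0 ≤ 1 / (2 * (s * R)) := by positivity
    have hB := mul_nonneg hq0 hC
    rw [e, hmax, abs_of_nonneg (by linarith)]
    nlinarith

lemma scaled_min_eq {n : ℕ} (hn : 1 ≤ n) {R s : ℝ} (hR : 0 < R) (hs : 0 < s) :
    min (1 / R) (R ^ (n - 1) / (s * R) ^ n) = 1 / R * min 1 (1 / s ^ n) := by
  obtain ⟨m, rfl⟩ : ∃ m, n = m + 1 := ⟨n - 1, by omega⟩
  rw [mul_min_of_nonneg _ _ (by positivity : (0 : ℝ) ≤ 1 / R), mul_one, Nat.add_sub_cancel]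
  congr 1
  rw [mul_pow]
  field_simp
  ring

lemma min_le_gmultD {n : ℕ} (hn : 3 ≤ n) {s : ℝ} (hs : 0 ≤ s) :
    ((n : ℝ) - 1) / (2 * n * (n + 2)) * min 1 (1 / s ^ n) ≤ gmultD n s := by
  have hn' : (3 : ℝ) ≤ n := by exact_mod_cast hn
  have hc : 0 ≤ ((n : ℝ) - 1) / (2 * n * (n + 2)) := div_nonneg (by linarith) (by positivity)
  rcases le_or_gt s 1 with h | h
  · have h1 : ((n : ℝ) - 1) / (2 * n * (n + 2)) * min 1 (1 / s ^ n) ≤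
        ((n : ℝ) - 1) / (2 * n * (n + 2)) * 1 := mul_le_mul_of_nonneg_left (min_le_left _ _) hc
    have e : gmultD n s =
        ((n : ℝ) - 1) / (2 * n * (n + 2)) * 1 + 3 * (1 - s ^ 2) / (2 * n * (n + 2)) := by
      simp only [gmultD, h, if_true]
      field_simp
      ring
    have : 0 ≤ 3 * (1 - s ^ 2) / (2 * (n : ℝ) * (n + 2)) :=
      div_nonneg (by nlinarith) (by positivity)
    linarith
  · rw [gmultD_of_one_le (by omega) h.le]
    exact mul_le_mul_of_nonneg_left (min_le_right _ _) hc

lemma min_le_gmult {n : ℕ} (hn : 3 ≤ n) (M : ℝ) {s : ℝ} (hs : 0 < s) :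
    M + ((n : ℝ) - 1) / (2 * n * (n + 2)) * (s * min 1 (1 / s ^ n)) ≤ gmult n M s := by
  have hn' : (3 : ℝ) ≤ n := by exact_mod_cast hn
  have hc : 0 ≤ ((n : ℝ) - 1) / (2 * n * (n + 2)) := div_nonneg (by linarith) (by positivity)
  rcases le_or_gt s 1 with h | h
  · have h1 : ((n : ℝ) - 1) / (2 * n * (n + 2)) * (s * min 1 (1 / s ^ n)) ≤
        ((n : ℝ) - 1) / (2 * n * (n + 2)) * (s * 1) := by
      gcongr
      exact min_le_left _ _
    have e : gmult n M s =
        M + ((n : ℝ) - 1) / (2 * n * (n + 2)) * (s * 1) +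
          s * (3 - s ^ 2) / (2 * n * (n + 2)) := by
      simp only [gmult, h, if_true]
      field_simp
      ring
    have : 0 ≤ s * (3 - s ^ 2) / (2 * (n : ℝ) * (n + 2)) :=
      div_nonneg (mul_nonneg hs.le (by nlinarith)) (by positivity)
    linarith
  · obtain ⟨m, rfl⟩ : ∃ m, n = m + 1 := ⟨n - 1, by omega⟩
    have h1 : (((m + 1 : ℕ) : ℝ) - 1) / (2 * (m + 1 : ℕ) * ((m + 1 : ℕ) + 2)) *
        (s * min 1 (1 / s ^ (m + 1))) ≤
        (((m + 1 : ℕ) : ℝ) - 1) / (2 * (m + 1 : ℕ) * ((m + 1 : ℕ) + 2)) *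
        (s * (1 / s ^ (m + 1))) := by
      gcongr
      exact min_le_right _ _
    have e : gmult (m + 1) M s =
        M + (((m + 1 : ℕ) : ℝ) - 1) / (2 * (m + 1 : ℕ) * ((m + 1 : ℕ) + 2)) *
          (s * (1 / s ^ (m + 1))) + 1 / (2 * (m + 1 : ℕ)) * (1 - 1 / s ^ m)
          + 1 / (m + 1 : ℕ) / ((m + 1 : ℕ) + 2) * (1 / s ^ m) := by
      rw [gmult_of_one_le _ _ h.le, Nat.add_sub_cancel]
      field_simp
      ring
    have h2 : 0 ≤ 1 / (2 * ((m + 1 : ℕ) : ℝ)) * (1 - 1 / s ^ m) := by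
      have : 1 / s ^ m ≤ 1 := (div_le_one (by positivity)).2 (one_le_pow₀ h.le)
      exact mul_nonneg (by positivity) (by linarith)
    have h3 : 0 ≤ 1 / ((m + 1 : ℕ) : ℝ) / ((m + 1 : ℕ) + 2) * (1 / s ^ m) := by positivity
    linarith

lemma gmult_le {n : ℕ} (hn : 1 ≤ n) (M : ℝ) {s : ℝ} (hs : 0 ≤ s) :
    gmult n M s ≤ M + 1 / (2 * n) := by
  have hn' : (1 : ℝ) ≤ n := by exact_mod_cast hn
  rcases le_or_gt s 1 with h | h
  · simp only [gmult, h, if_true]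
    have h1 : s / (2 * n) ≤ 1 / (2 * (n : ℝ)) := by gcongr
    have h2 : 0 ≤ s ^ 3 / (2 * (n : ℝ) * (n + 2)) := by positivity
    linarith
  · rw [gmult_of_one_le _ _ h.le]
    have h2 : 0 ≤ 1 / (2 * (n : ℝ) * (n + 2) * s ^ (n - 1)) := by positivity
    linarith

lemma gmultD_le {n : ℕ} (hn : 1 ≤ n) (s : ℝ) :
    gmultD n s ≤ 1 / (2 * n) := by
  have hn' : (1 : ℝ) ≤ n := by exact_mod_cast hn
  rcases le_or_gt s 1 with h | h
  · simp only [gmultD, h, if_true]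
    have h2 : 0 ≤ 3 * s ^ 2 / (2 * (n : ℝ) * (n + 2)) := by positivity
    linarith
  · rw [gmultD_of_one_le hn h.le]
    have h1 : 1 / s ^ n ≤ 1 := (div_le_one (by positivity)).2 (one_le_pow₀ h.le)
    have h2 : ((n : ℝ) - 1) / (2 * n * (n + 2)) ≤ 1 / (2 * n) := by
      rw [div_le_div_iff₀ (by positivity) (by positivity)]
      nlinarith
    have h3 : 0 ≤ ((n : ℝ) - 1) / (2 * n * (n + 2)) := div_nonneg (by linarith) (by positivity)
    nlinarith

open Filter Topology in
lemma tendsto_gmult {n : ℕ} (hn : 2 ≤ n) (M : ℝ) :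
    Tendsto (gmult n M) atTop (𝓝 (M + 1 / (2 * n))) := by
  have hn' : (2 : ℝ) ≤ n := by exact_mod_cast hn
  have h1 : Tendsto (fun s : ℝ => 2 * (n : ℝ) * (n + 2) * s ^ (n - 1)) atTop atTop :=
    (tendsto_pow_atTop (by omega)).const_mul_atTop (by positivity)
  have h2 := (h1.const_div_atTop 1).const_sub (M + 1 / (2 * (n : ℝ)))
  rw [sub_zero] at h2
  refine h2.congr' ?_
  filter_upwards [eventually_ge_atTop 1] with s hs
  exact (gmult_of_one_le n M hs).symm

/-- Lower and upper bounds for the scaled multiplier, whose radial derivatives are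
`φ_R'(r) = φ₀'(r/R)` and `φ_R''(r) = (1/R)φ₀''(r/R)`:
(i) `φ_R'(r)/r ≥ M/r + ((n-1)/(2n(n+2))) min(1/R, R^{n-1}/rⁿ)`;
(ii) `φ_R''(r) ≥ ((n-1)/(2n(n+2))) min(1/R, R^{n-1}/rⁿ)`;
(iii) `sup φ_R' = M + 1/(2n)` and `sup φ_R'' = 1/(2nR)`;
(iv) `|Δφ_R(x)| ≤ M(n-1)/|x| + 1/(2 max(|x|,R))` for `x ≠ 0`. -/
theorem phiR_bounds (n : ℕ) (hn : 3 ≤ n) (M : ℝ) (hM : 1 ≤ M) (R : ℝ) (hR : 0 < R) :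
    (∀ r : ℝ, 0 < r →
      M / r + ((n : ℝ) - 1) / (2 * n * (n + 2)) * min (1 / R) (R ^ (n - 1) / r ^ n)
        ≤ gmult n M (r / R) / r)
    ∧ (∀ r : ℝ, 0 < r →
      ((n : ℝ) - 1) / (2 * n * (n + 2)) * min (1 / R) (R ^ (n - 1) / r ^ n)
        ≤ (1 / R) * deriv (gmult n M) (r / R))
    ∧ (⨆ r : Set.Ici (0 : ℝ), gmult n M ((r : ℝ) / R)) = M + 1 / (2 * n)
    ∧ (⨆ r : Set.Ici (0 : ℝ), (1 / R) * deriv (gmult n M) ((r : ℝ) / R)) = 1 / (2 * n * R)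
    ∧ (∀ x : EuclideanSpace ℝ (Fin n), x ≠ 0 →
        |lap (phiR n M R) x| ≤ M * ((n : ℝ) - 1) / ‖x‖ + 1 / (2 * max ‖x‖ R)) := by
  have hD : deriv (gmult n M) = gmultD n :=
    funext fun s => (hasDerivAt_gmult (by omega) M s).deriv
  have hscale : ∀ r : ℝ, r / R * R = r := fun r => div_mul_cancel₀ r hR.ne'
  rw [hD]
  refine ⟨fun r hr => ?_, fun r hr => ?_, ?_, ?_, fun x hx => ?_⟩
  · have hs : 0 < r / R := by positivity
    have h := min_le_gmult hn M hs
    have hmin := scaled_min_eq (n := n) (by omega) hR hs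
    rw [hscale] at hmin
    rw [hmin, le_div_iff₀ hr]
    refine le_of_eq_of_le ?_ h
    field_simp
  · have hs : 0 < r / R := by positivity
    have hmin := scaled_min_eq (n := n) (by omega) hR hs
    rw [hscale] at hmin
    rw [hmin, mul_left_comm]
    exact mul_le_mul_of_nonneg_left (min_le_gmultD hn hs.le) (by positivity)
  · refine ciSup_eq_of_forall_le_of_forall_lt_exists_gt
      (fun r => gmult_le (by omega) M (div_nonneg r.2 hR.le)) fun w hw => ?_
    obtain ⟨s, hws, hs⟩ := (((tendsto_gmult (n := n) (by omega) M).eventually_const_lt hw).and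
      (Filter.eventually_ge_atTop 0)).exists
    exact ⟨⟨s * R, mul_nonneg hs hR.le⟩, by simpa [hR.ne'] using hws⟩
  · have e : 1 / (2 * (n : ℝ) * R) = 1 / R * (1 / (2 * n)) := by
      rw [one_div_mul_one_div, mul_comm R]
    rw [e]
    refine ciSup_eq_of_forall_le_of_forall_lt_exists_gt (fun r => ?_) fun w hw => ?_
    · exact mul_le_mul_of_nonneg_left (gmultD_le (by omega) _) (by positivity)
    · exact ⟨⟨0, le_refl (0 : ℝ)⟩, by simpa [gmultD] using hw⟩
  · have hs : 0 < ‖x‖ / R := div_pos (norm_pos_iff.2 hx) hR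
    have h := lap_bound_radial hn hM hR hs
    rw [hscale] at h
    rw [lap_phiR (by omega) M hR hx]
    exact h
end
end

section
/- Bilaplacian of the scaled multiplier in dimension three: Let n = 3, M ≥ 1, R > 0. Then for every x with 0 < |x| < R, Δ²φ_R(x) = −1/R³, and for every x with |x| > R, Δ²φ_R(x) = 0. -/
/-!
For a radial function `f(x) = F(|x|)` on `ℝⁿ`, away from the origin, `Δf = F'' + (n-1)/|x| · F'`
(`lap_radial`). Since `φ₀'` is continuous, the fundamental theorem of calculus identifies the
radial derivative of `φ_R` as `φ₀'(|x|/R)`. In dimension three one application of the radial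
formula gives, with `r = |x|`,
* `Δφ_R = 1/(2R) + 2M/r - r²/(6R³)` for `0 < r < R`,
* `Δφ_R = (2M + 1/3)/r` for `r > R`.

Both are radial on open shells, so the formula applies again; `1/r` is harmonic in dimension three
and `Δ(r²) = 6`, which gives the two claimed values.
-/

open MeasureTheory
open scoped BigOperators

noncomputable section

theorem hasFDerivAt_norm_radial {n : ℕ} {x : EuclideanSpace ℝ (Fin n)} (hx : 0 < ‖x‖) :
    HasFDerivAt (fun y : EuclideanSpace ℝ (Fin n) => ‖y‖) (‖x‖⁻¹ • innerSL ℝ x) x := by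
  have h := ((hasStrictFDerivAt_norm_sq x).hasFDerivAt).sqrt (by positivity)
  simp only [Real.sqrt_sq (norm_nonneg _)] at h
  refine h.congr_fderiv ?_
  ext v
  simp
  field_simp

theorem pdR_radial {n : ℕ} {U : Set ℝ} (hU : IsOpen U) (hpos : ∀ r ∈ U, 0 < r)
    {F F1 : ℝ → ℝ} (hF : ∀ r ∈ U, HasDerivAt F (F1 r) r)
    {f : EuclideanSpace ℝ (Fin n) → ℝ} (hf : ∀ y, ‖y‖ ∈ U → f y = F ‖y‖)
    (k : Fin n) (x : EuclideanSpace ℝ (Fin n)) (hx : ‖x‖ ∈ U) :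
    pdR f k x = F1 ‖x‖ * (‖x‖⁻¹ * x k) := by
  have hev : f =ᶠ[nhds x] fun y => F ‖y‖ := by
    filter_upwards [(hU.preimage continuous_norm).mem_nhds hx] with y hy using hf y hy
  have h := (hF _ hx).comp_hasFDerivAt x (hasFDerivAt_norm_radial (hpos _ hx))
  have h2 := (h.congr_of_eventuallyEq hev).fderiv
  rw [pdR, h2]
  simp [EuclideanSpace.inner_single_right]

/-- The Laplacian of a function that is radial on an open shell `{‖x‖ ∈ U}` avoiding the origin. -/
theorem lap_radial {n : ℕ} {U : Set ℝ} (hU : IsOpen U) (hpos : ∀ r ∈ U, 0 < r)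
    {F F1 F2 : ℝ → ℝ} (hF : ∀ r ∈ U, HasDerivAt F (F1 r) r)
    (hF1 : ∀ r ∈ U, HasDerivAt F1 (F2 r) r)
    {f : EuclideanSpace ℝ (Fin n) → ℝ} (hf : ∀ y, ‖y‖ ∈ U → f y = F ‖y‖)
    (x : EuclideanSpace ℝ (Fin n)) (hx : ‖x‖ ∈ U) :
    lap f x = F2 ‖x‖ + (n - 1) / ‖x‖ * F1 ‖x‖ := by
  have hr := hpos _ hx
  have key : ∀ k : Fin n, pdR (pdR f k) k x
      = (F2 ‖x‖ / ‖x‖ ^ 2 - F1 ‖x‖ / ‖x‖ ^ 3) * (x k) ^ 2 + F1 ‖x‖ / ‖x‖ := by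
    intro k
    have hev : pdR f k =ᶠ[nhds x] fun y => F1 ‖y‖ * (‖y‖⁻¹ * y k) := by
      filter_upwards [(hU.preimage continuous_norm).mem_nhds hx] with y hy
      exact pdR_radial hU hpos hF hf k y hy
    have hN := hasFDerivAt_norm_radial hr
    have h1 := (hF1 _ hx).comp_hasFDerivAt x hN
    have h2 := (hasDerivAt_inv hr.ne').comp_hasFDerivAt x hN
    have h3 : HasFDerivAt (fun y : EuclideanSpace ℝ (Fin n) => y k)
        (EuclideanSpace.proj k : EuclideanSpace ℝ (Fin n) →L[ℝ] ℝ) x :=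
      (EuclideanSpace.proj k : EuclideanSpace ℝ (Fin n) →L[ℝ] ℝ).hasFDerivAt
    have h := ((h1.mul (h2.mul h3)).congr_of_eventuallyEq hev).fderiv
    rw [pdR, h]
    simp [EuclideanSpace.inner_single_right]
    field_simp
    ring
  have hs : ∑ k, (x k) ^ 2 = ‖x‖ ^ 2 := by
    rw [EuclideanSpace.norm_sq_eq]; simp
  rw [lap, Finset.sum_congr rfl (fun k _ => key k), Finset.sum_add_distrib, ← Finset.mul_sum, hs]
  simp
  field_simp
  ring

theorem continuous_gmult_three (M : ℝ) : Continuous (gmult 3 M) := by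
  -- Replacing `r` by `max r 1` in the outer branch removes its singularity at `0`.
  have h : gmult 3 M = fun r => if r ≤ 1 then M + r / 6 - r ^ 3 / 30
      else M + 1 / 6 - 1 / (30 * (max r 1) ^ 2) := by
    funext r
    unfold gmult
    split_ifs with hr
    · norm_num
    · rw [max_eq_left (not_le.mp hr).le]; norm_num
  rw [h]
  refine Continuous.if_le (by fun_prop) ?_ continuous_id continuous_const ?_
  · refine continuous_const.sub (continuous_const.div (by fun_prop) fun r => ?_)
    have : (0 : ℝ) < max r 1 := lt_max_of_lt_right one_pos
    positivity
  · rintro r hr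
    obtain rfl : r = 1 := hr
    norm_num

theorem hasDerivAt_scaled_phi0 (M : ℝ) {R : ℝ} (hR : 0 < R) (r : ℝ) :
    HasDerivAt (fun r => R * phi0 3 M (r / R)) (gmult 3 M (r / R)) r := by
  have h0 : HasDerivAt (phi0 3 M) (gmult 3 M (r / R)) (r / R) :=
    (continuous_gmult_three M).integral_hasStrictDerivAt 0 (r / R) |>.hasDerivAt
  have h := (h0.comp r ((hasDerivAt_id r).div_const R)).const_mul R
  refine h.congr_deriv ?_
  field_simp

/-- In dimension three `1/r` is harmonic and `Δ(r²) = 6`; this is the form of `Δφ_R` on each shell. -/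
theorem lap_of_radial_form {U : Set ℝ} (hU : IsOpen U) (hpos : ∀ r ∈ U, 0 < r) (a b c : ℝ)
    {f : EuclideanSpace ℝ (Fin 3) → ℝ} (hf : ∀ y, ‖y‖ ∈ U → f y = a + b / ‖y‖ + c * ‖y‖ ^ 2)
    (x : EuclideanSpace ℝ (Fin 3)) (hx : ‖x‖ ∈ U) : lap f x = 6 * c := by
  have hr := hpos _ hx
  rw [lap_radial hU hpos (F := fun r => a + b * r⁻¹ + c * r ^ 2)
    (F1 := fun r => b * (-(r ^ 2)⁻¹) + c * (2 * r)) (F2 := fun r => b * (2 * (r ^ 3)⁻¹) + c * 2)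
    ?_ ?_ (fun y hy => by rw [hf y hy, div_eq_mul_inv]) x hx]
  · push_cast
    field_simp
    ring
  · intro r hr
    have h := (((hasDerivAt_inv (hpos r hr).ne').const_mul b).const_add a).add
      ((hasDerivAt_pow 2 r).const_mul c)
    refine h.congr_deriv ?_
    norm_num
  · intro r hr
    have h0 := (hpos r hr).ne'
    have h := (((hasDerivAt_pow 2 r).inv (pow_ne_zero 2 h0)).neg.const_mul b).add
      (((hasDerivAt_id r).const_mul 2).const_mul c)
    refine h.congr_deriv ?_
    norm_num
    field_simp

/-- Bilaplacian of the scaled multiplier in dimension three: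
`Δ²φ_R(x) = -1/R³` for `0 < |x| < R` and `Δ²φ_R(x) = 0` for `|x| > R`. -/
theorem bilap_phiR_dim_three (M : ℝ) (hM : 1 ≤ M) (R : ℝ) (hR : 0 < R) :
    (∀ x : EuclideanSpace ℝ (Fin 3), 0 < ‖x‖ → ‖x‖ < R →
      lap (lap (phiR 3 M R)) x = -(1 / R ^ 3))
    ∧ (∀ x : EuclideanSpace ℝ (Fin 3), R < ‖x‖ →
      lap (lap (phiR 3 M R)) x = 0) := by
  constructor
  · intro x hx0 hxR
    have hpos : ∀ r ∈ Set.Ioo 0 R, 0 < r := fun r hr => hr.1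
    rw [lap_of_radial_form isOpen_Ioo hpos (1 / (2 * R)) (2 * M) (-(1 / (6 * R ^ 3))) ?_ x
      ⟨hx0, hxR⟩]
    · field_simp
    intro y hy
    have hy0 := hpos _ hy
    rw [lap_radial isOpen_Ioo hpos (F := fun r => R * phi0 3 M (r / R))
      (F1 := fun r => M + r / (6 * R) - r ^ 3 / (30 * R ^ 3))
      (F2 := fun r => 1 / (6 * R) - 3 * r ^ 2 / (30 * R ^ 3)) ?_ ?_ (f := phiR 3 M R) (fun z _ => rfl) y hy]
    · push_cast
      field_simp
      ring
    · intro r hr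
      refine (hasDerivAt_scaled_phi0 M hR r).congr_deriv ?_
      rw [gmult, if_pos ((div_le_one hR).mpr hr.2.le)]
      push_cast
      field_simp
      ring
    · intro r hr
      have h := (((hasDerivAt_id r).div_const (6 * R)).const_add M).sub
        ((hasDerivAt_pow 3 r).div_const (30 * R ^ 3))
      refine h.congr_deriv ?_
      norm_num
  · intro x hxR
    have hpos : ∀ r ∈ Set.Ioi R, 0 < r := fun r hr => hR.trans hr
    rw [lap_of_radial_form isOpen_Ioi hpos 0 (2 * M + 1 / 3) 0 ?_ x hxR]
    · simp
    intro y hy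
    have hy0 := hpos _ hy
    rw [lap_radial isOpen_Ioi hpos (F := fun r => R * phi0 3 M (r / R))
      (F1 := fun r => M + 1 / 6 - R ^ 2 / 30 * (r ^ 2)⁻¹)
      (F2 := fun r => R ^ 2 / 15 * (r ^ 3)⁻¹) ?_ ?_ (f := phiR 3 M R) (fun z _ => rfl) y hy]
    · push_cast
      field_simp
      ring
    · intro r hr
      have hr0 := hpos r hr
      refine (hasDerivAt_scaled_phi0 M hR r).congr_deriv ?_
      rw [gmult, if_neg (not_le.mpr ((one_lt_div hR).mpr hr))]
      norm_num
      field_simp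
    · intro r hr
      have h0 := (hpos r hr).ne'
      have h := (((hasDerivAt_pow 2 r).inv (pow_ne_zero 2 h0)).const_mul (R ^ 2 / 30)).const_sub
        (M + 1 / 6)
      refine h.congr_deriv ?_
      norm_num
      field_simp
      ring
end
end

section
/- Smoothing bilinear estimate (endpoint of Lemma 4.2, first part): Let n ≥ 3 and K > 0, let A : ℝⁿ → ℝⁿ be continuous, and let φ ∈ C²(ℝⁿ; ℝ) satisfy |∇φ(x)| ≤ K for all x and |x|·|Δφ(x)| ≤ K for all x ≠ 0. Then for all f, g ∈ C_c^∞(ℝⁿ; ℂ): | ∫_{ℝⁿ} conj(f)·∇_A g·∇φ dx | ≤ K·(1 + 2/(n−2))·‖∇_A f‖_{L²}·‖g‖_{L²}. -/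
/-!
The vector field `f̄ g ∇φ` has compact support, so its divergence integrates to zero. In
`∂ₖ(f̄ g) = f̄ (∇_A g)ₖ + conj((∇_A f)ₖ) g` the gauge terms cancel (`A` is real), hence

  `∫ f̄ ∇_A g·∇φ = - ∫ conj(∇_A f)·∇φ g - ∫ f̄ g Δφ`   (`integral_by_parts`).

Since `|∇φ| ≤ K`, the first term on the right is at most `K ‖∇_A f‖ ‖g‖`. Since
`|Δφ| ≤ K/|x|`, the second is at most `K ‖f/|x|‖ ‖g‖ ≤ K (2/(n-2)) ‖∇_A f‖ ‖g‖` by the magnetic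
Hardy inequality (`integral_weight_le`).

Hardy's inequality is proved in the regularized form `hardy_regularized`, by applying the same
integration by parts with `g = f` to the smooth field `V = x/(|x|² + ε)`, which satisfies
`div V ≥ (n-2)/(|x|² + ε)` and `|V| ≤ (|x|² + ε)^{-1/2}`.
-/

open MeasureTheory Complex
open scoped BigOperators

noncomputable section

/-- The pointwise length `|∇_A f| = (Σₖ |(∇_A f)ₖ|²)^{1/2}` of the magnetic gradient. -/
def magNorm {n : ℕ} (A : EuclideanSpace ℝ (Fin n) → EuclideanSpace ℝ (Fin n))
    (f : EuclideanSpace ℝ (Fin n) → ℂ) (x : EuclideanSpace ℝ (Fin n)) : ℝ :=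
  Real.sqrt (∑ k, ‖magD A k f x‖ ^ 2)

section Helpers

variable {n : ℕ}

local notation "E" => EuclideanSpace ℝ (Fin n)

lemma magNorm_nonneg (A : E → E) (f : E → ℂ) (x : E) : 0 ≤ magNorm A f x :=
  Real.sqrt_nonneg _

lemma magNorm_sq (A : E → E) (f : E → ℂ) (x : E) :
    magNorm A f x ^ 2 = ∑ k, ‖magD A k f x‖ ^ 2 :=
  Real.sq_sqrt (Finset.sum_nonneg fun _ _ => sq_nonneg _)

lemma magD_continuous {A : E → E} (hA : Continuous A) {f : E → ℂ} (hf : ContDiff ℝ 1 f)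
    (k : Fin n) : Continuous (magD A k f) := by
  have h1 : Continuous fun x => fderiv ℝ f x (EuclideanSpace.single k 1) :=
    (hf.continuous_fderiv one_ne_zero).clm_apply continuous_const
  have h2 : Continuous f := hf.continuous
  have h3 : Continuous fun x => A x k := by fun_prop
  unfold magD
  fun_prop

lemma magD_eq_zero (A : E → E) {f : E → ℂ} {x : E} (hx : x ∉ tsupport f) (k : Fin n) :
    magD A k f x = 0 := by
  have h1 : f x = 0 := image_eq_zero_of_notMem_tsupport hx
  have h2 : fderiv ℝ f x = 0 := fderiv_of_notMem_tsupport ℝ hx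
  simp [magD, h1, h2]

lemma magNorm_continuous {A : E → E} (hA : Continuous A) {f : E → ℂ} (hf : ContDiff ℝ 1 f) :
    Continuous (magNorm A f) := by
  have := fun k => magD_continuous hA hf k
  unfold magNorm
  fun_prop

lemma magNorm_hasCompactSupport (A : E → E) {f : E → ℂ} (hfc : HasCompactSupport f) :
    HasCompactSupport (magNorm A f) :=
  HasCompactSupport.intro hfc fun x hx => by simp [magNorm, magD_eq_zero A hx]

lemma pdR_continuous {V : E → ℝ} (hV : ContDiff ℝ 1 V) (k : Fin n) : Continuous (pdR V k) :=
  (hV.continuous_fderiv one_ne_zero).clm_apply continuous_const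

lemma pdR_contDiff {φ : E → ℝ} (hφ : ContDiff ℝ 2 φ) (k : Fin n) : ContDiff ℝ 1 (pdR φ k) :=
  (hφ.fderiv_right (m := 1) (by norm_num)).clm_apply contDiff_const

lemma lap_continuous {φ : E → ℝ} (hφ : ContDiff ℝ 2 φ) : Continuous (lap φ) := by
  have := fun k => pdR_continuous (pdR_contDiff hφ k) k
  unfold lap
  fun_prop

lemma integral_fderiv_eq_zero {h : E → ℂ} (hh : ContDiff ℝ 1 h) (hc : HasCompactSupport h)
    (v : E) : ∫ x, fderiv ℝ h x v = 0 := by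
  have hd : Continuous fun x => fderiv ℝ h x v :=
    (hh.continuous_fderiv one_ne_zero).clm_apply continuous_const
  have hdc : HasCompactSupport fun x => fderiv ℝ h x v := hc.fderiv_apply ℝ v
  have key := integral_mul_fderiv_eq_neg_fderiv_mul_of_integrable (μ := (volume : Measure E))
    (𝕜 := ℂ) (f := fun _ => 1) (g := h) (v := v) (by simp)
    (by simpa using hd.integrable_of_hasCompactSupport hdc)
    (by simpa using hh.continuous.integrable_of_hasCompactSupport hc)
    (fun x _ => by fun_prop) (fun x _ => hh.differentiable one_ne_zero x)
  simpa using key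

/-- The product rule for the covariant derivative: the gauge terms of the two factors cancel. -/
lemma fderiv_conj_mul_mul (A : E → E) {f g : E → ℂ} {V : E → ℝ} (hf : ContDiff ℝ 1 f)
    (hg : ContDiff ℝ 1 g) (hV : ContDiff ℝ 1 V) (k : Fin n) (x : E) :
    fderiv ℝ (fun y => (starRingEnd ℂ) (f y) * g y * (V y : ℂ)) x (EuclideanSpace.single k 1)
      = (starRingEnd ℂ) (f x) * (magD A k g x * (V x : ℂ))
        + (starRingEnd ℂ) (magD A k f x) * (V x : ℂ) * g x
        + (starRingEnd ℂ) (f x) * g x * (pdR V k x : ℂ) := by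
  have hf' := (hf.differentiable one_ne_zero x).hasFDerivAt
  have hg' := (hg.differentiable one_ne_zero x).hasFDerivAt
  have hV' := (hV.differentiable one_ne_zero x).hasFDerivAt
  have h1 := (Complex.conjCLE.toContinuousLinearMap.hasFDerivAt (x := f x)).comp x hf'
  have h2 := (Complex.ofRealCLM.hasFDerivAt (x := V x)).comp x hV'
  have h3 := ((h1.mul hg').mul h2).fderiv
  have h4 : (fun y => (starRingEnd ℂ) (f y) * g y * (V y : ℂ))
      = ((⇑(Complex.conjCLE.toContinuousLinearMap) ∘ f) * g) * (⇑Complex.ofRealCLM ∘ V) := by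
    ext y; simp
  rw [h4, h3]
  simp [magD, pdR]
  ring

/-- Covariant divergence theorem:
`∫ f̄ ∇_A g·V + ∫ conj(∇_A f)·V g + ∫ f̄ g div V = 0`. -/
lemma integral_by_parts {A : E → E} (hA : Continuous A) {f g : E → ℂ} {V : Fin n → E → ℝ}
    (hf : ContDiff ℝ 1 f) (hfc : HasCompactSupport f) (hg : ContDiff ℝ 1 g)
    (hV : ∀ k, ContDiff ℝ 1 (V k)) :
    (∫ x, (starRingEnd ℂ) (f x) * ∑ k, magD A k g x * (V k x : ℂ))
      + (∫ x, (∑ k, (starRingEnd ℂ) (magD A k f x) * (V k x : ℂ)) * g x)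
      + (∫ x, (starRingEnd ℂ) (f x) * g x * ((∑ k, pdR (V k) k x : ℝ) : ℂ)) = 0 := by
  have cf := hf.continuous
  have cg := hg.continuous
  have cV := fun k => (hV k).continuous
  have cDf := fun k => magD_continuous hA hf k
  have cDg := fun k => magD_continuous hA hg k
  have cdV := fun k => pdR_continuous (hV k) k
  have cstar : Continuous (starRingEnd ℂ) := Complex.continuous_conj
  have i1 : Integrable fun x => (starRingEnd ℂ) (f x) * ∑ k, magD A k g x * (V k x : ℂ) :=
    Continuous.integrable_of_hasCompactSupport (by fun_prop)
      (HasCompactSupport.intro hfc fun x hx => by simp [image_eq_zero_of_notMem_tsupport hx])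
  have i2 : Integrable fun x => (∑ k, (starRingEnd ℂ) (magD A k f x) * (V k x : ℂ)) * g x :=
    Continuous.integrable_of_hasCompactSupport (by fun_prop)
      (HasCompactSupport.intro hfc fun x hx => by simp [magD_eq_zero A hx])
  have i3 : Integrable fun x =>
      (starRingEnd ℂ) (f x) * g x * ((∑ k, pdR (V k) k x : ℝ) : ℂ) :=
    Continuous.integrable_of_hasCompactSupport (by fun_prop)
      (HasCompactSupport.intro hfc fun x hx => by simp [image_eq_zero_of_notMem_tsupport hx])
  have hC : ∀ k, ContDiff ℝ 1 fun y => (starRingEnd ℂ) (f y) * g y * (V k y : ℂ) := fun k =>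
    ((Complex.conjCLE.contDiff.comp hf).mul hg).mul (Complex.ofRealCLM.contDiff.comp (hV k))
  have hS : ∀ k, HasCompactSupport fun y => (starRingEnd ℂ) (f y) * g y * (V k y : ℂ) := fun k =>
    HasCompactSupport.intro hfc fun x hx => by simp [image_eq_zero_of_notMem_tsupport hx]
  rw [← integral_add i1 i2, ← integral_add (by exact i1.add i2) i3]
  calc _ = ∫ x, ∑ k, fderiv ℝ (fun y => (starRingEnd ℂ) (f y) * g y * (V k y : ℂ)) x
            (EuclideanSpace.single k 1) := by
        congr 1
        ext x
        simp only [fderiv_conj_mul_mul A hf hg (hV _)]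
        push_cast
        simp only [Finset.sum_add_distrib, Finset.mul_sum, Finset.sum_mul]
    _ = ∑ k, ∫ x, fderiv ℝ (fun y => (starRingEnd ℂ) (f y) * g y * (V k y : ℂ)) x
            (EuclideanSpace.single k 1) := by
        refine integral_finsetSum _ fun k _ => ?_
        exact (((hC k).continuous_fderiv one_ne_zero).clm_apply
          continuous_const).integrable_of_hasCompactSupport ((hS k).fderiv_apply ℝ _)
    _ = 0 := Finset.sum_eq_zero fun k _ => integral_fderiv_eq_zero (hC k) (hS k) _

lemma cauchy_schwarz_integral {a b : E → ℝ} (ha : Continuous a) (hac : HasCompactSupport a)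
    (hb : Continuous b) (hbc : HasCompactSupport b) (ha0 : ∀ x, 0 ≤ a x) (hb0 : ∀ x, 0 ≤ b x) :
    ∫ x, a x * b x ≤ Real.sqrt (∫ x, a x ^ 2) * Real.sqrt (∫ x, b x ^ 2) := by
  have := integral_mul_le_Lp_mul_Lq_of_nonneg (μ := (volume : Measure E))
    Real.HolderConjugate.two_two (f := a) (g := b) (.of_forall ha0) (.of_forall hb0)
    (ha.memLp_of_hasCompactSupport hac) (hb.memLp_of_hasCompactSupport hbc)
  simpa [Real.sqrt_eq_rpow] using this

lemma norm_sum_mul_le (A : E → E) (f : E → ℂ) (V : Fin n → ℝ) (x : E) :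
    ‖∑ k, magD A k f x * (V k : ℂ)‖ ≤ magNorm A f x * Real.sqrt (∑ k, V k ^ 2) := by
  refine (norm_sum_le _ _).trans ?_
  have := Real.sum_mul_le_sqrt_mul_sqrt Finset.univ (fun k => ‖magD A k f x‖) (fun k => |V k|)
  simpa [magNorm] using this

lemma norm_sum_conj_mul_le (A : E → E) (f : E → ℂ) (V : Fin n → ℝ) (x : E) :
    ‖∑ k, (starRingEnd ℂ) (magD A k f x) * (V k : ℂ)‖
      ≤ magNorm A f x * Real.sqrt (∑ k, V k ^ 2) := by
  refine le_trans (le_of_eq ?_) (norm_sum_mul_le A f V x)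
  rw [← RCLike.norm_conj (∑ k, magD A k f x * (V k : ℂ)), map_sum]
  simp

/-- The regularized Hardy field `x / (|x|² + ε)`, in components. -/
def hardyField (ε : ℝ) (k : Fin n) (x : E) : ℝ := x k / (‖x‖ ^ 2 + ε)

lemma hardyField_contDiff {ε : ℝ} (hε : 0 < ε) (k : Fin n) :
    ContDiff ℝ 1 (hardyField (n := n) ε k) := by
  have h1 : ContDiff ℝ 1 fun x : E => x k := (EuclideanSpace.proj k : E →L[ℝ] ℝ).contDiff
  exact h1.div ((contDiff_norm_sq ℝ).add contDiff_const) fun x => by positivity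

lemma pdR_hardyField {ε : ℝ} (hε : 0 < ε) (k : Fin n) (x : E) :
    pdR (hardyField ε k) k x
      = 1 / (‖x‖ ^ 2 + ε) - 2 * x k ^ 2 / (‖x‖ ^ 2 + ε) ^ 2 := by
  have hne : ‖x‖ ^ 2 + ε ≠ 0 := by positivity
  have h1 : HasFDerivAt (fun x : E => x k) (EuclideanSpace.proj k : E →L[ℝ] ℝ) x :=
    (EuclideanSpace.proj k : E →L[ℝ] ℝ).hasFDerivAt
  have h2 : HasFDerivAt (fun x : E => ‖x‖ ^ 2 + ε) (2 • (innerSL ℝ x)) x :=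
    (hasStrictFDerivAt_norm_sq x).hasFDerivAt.add_const ε
  have h3 := (h1.mul ((hasDerivAt_inv hne).comp_hasFDerivAt x h2)).fderiv
  have h4 : hardyField ε k = (fun x : E => x k) * (Inv.inv ∘ fun x : E => ‖x‖ ^ 2 + ε) := by
    ext y; simp [hardyField, div_eq_mul_inv]
  rw [pdR, h4, h3]
  simp [EuclideanSpace.inner_single_right]
  field_simp
  ring

lemma div_hardyField_ge {ε : ℝ} (hε : 0 < ε) (x : E) :
    ((n : ℝ) - 2) / (‖x‖ ^ 2 + ε) ≤ ∑ k, pdR (hardyField ε k) k x := by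
  have hpos : 0 < ‖x‖ ^ 2 + ε := by positivity
  have hs : ∑ k, x k ^ 2 = ‖x‖ ^ 2 := by rw [EuclideanSpace.norm_sq_eq]; simp
  have : ∑ k, pdR (hardyField ε k) k x
      = n / (‖x‖ ^ 2 + ε) - 2 * ‖x‖ ^ 2 / (‖x‖ ^ 2 + ε) ^ 2 := by
    simp_rw [pdR_hardyField hε, Finset.sum_sub_distrib, ← Finset.sum_div, ← Finset.mul_sum, hs]
    simp
  rw [this, sub_div]
  have : 2 * ‖x‖ ^ 2 / (‖x‖ ^ 2 + ε) ^ 2 ≤ 2 / (‖x‖ ^ 2 + ε) := by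
    rw [div_le_div_iff₀ (by positivity) hpos]
    nlinarith [mul_pos hε hpos]
  linarith

lemma sqrt_sum_hardyField_le {ε : ℝ} (hε : 0 < ε) (x : E) :
    Real.sqrt (∑ k, hardyField ε k x ^ 2) ≤ 1 / Real.sqrt (‖x‖ ^ 2 + ε) := by
  have hpos : 0 < ‖x‖ ^ 2 + ε := by positivity
  have hs : ∑ k, x k ^ 2 = ‖x‖ ^ 2 := by rw [EuclideanSpace.norm_sq_eq]; simp
  rw [← Real.sqrt_one, ← Real.sqrt_div zero_le_one]
  apply Real.sqrt_le_sqrt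
  simp_rw [hardyField, div_pow, ← Finset.sum_div, hs]
  rw [div_le_div_iff₀ (by positivity) hpos]
  nlinarith

/-- Magnetic Hardy inequality with the weight `1/|x|²` regularized to `1/(|x|² + ε)`; the
constant does not depend on `ε`. -/
lemma hardy_regularized (hn : 3 ≤ n) {A : E → E} (hA : Continuous A) {f : E → ℂ}
    (hf : ContDiff ℝ 1 f) (hfc : HasCompactSupport f) {ε : ℝ} (hε : 0 < ε) :
    Real.sqrt (∫ x, (‖f x‖ / Real.sqrt (‖x‖ ^ 2 + ε)) ^ 2)
      ≤ 2 / ((n : ℝ) - 2) * Real.sqrt (∫ x, magNorm A f x ^ 2) := by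
  have hn2 : (0 : ℝ) < (n : ℝ) - 2 := by
    have : (3 : ℝ) ≤ n := by exact_mod_cast hn
    linarith
  have cf := hf.continuous
  have hpos : ∀ x : E, 0 < ‖x‖ ^ 2 + ε := fun x => by positivity
  have hw : Continuous fun x : E => ‖f x‖ / Real.sqrt (‖x‖ ^ 2 + ε) :=
    cf.norm.div (by fun_prop) fun x => (Real.sqrt_pos.2 (hpos x)).ne'
  have hwc : HasCompactSupport fun x : E => ‖f x‖ / Real.sqrt (‖x‖ ^ 2 + ε) :=
    HasCompactSupport.intro hfc fun x hx => by simp [image_eq_zero_of_notMem_tsupport hx]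
  have cm := magNorm_continuous hA hf
  have hmc := magNorm_hasCompactSupport A hfc
  set w : E → ℝ := fun x => ‖f x‖ / Real.sqrt (‖x‖ ^ 2 + ε) with hwdef
  have hw0 : ∀ x, 0 ≤ w x := fun x => by positivity
  have iM : Integrable fun x => magNorm A f x * w x :=
    (cm.mul hw).integrable_of_hasCompactSupport hmc.mul_right
  have hV := fun k => hardyField_contDiff (n := n) hε k
  have cdV := fun k => pdR_continuous (hV k) k
  have iW : Integrable fun x => w x ^ 2 :=
    (hw.pow 2).integrable_of_hasCompactSupport
      (HasCompactSupport.intro hfc fun x hx => by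
        simp [hwdef, image_eq_zero_of_notMem_tsupport hx])
  have cD : Continuous fun x : E => ∑ k, pdR (hardyField ε k) k x :=
    continuous_finsetSum _ fun k _ => cdV k
  have iD : Integrable fun x => ‖f x‖ ^ 2 * ∑ k, pdR (hardyField ε k) k x :=
    ((cf.norm.pow 2).mul cD).integrable_of_hasCompactSupport
      (HasCompactSupport.intro hfc fun x hx => by
        simp [image_eq_zero_of_notMem_tsupport hx])
  have ibp := integral_by_parts hA hf hfc hf hV
  have b1 : ‖∫ x, (starRingEnd ℂ) (f x) * ∑ k, magD A k f x * (hardyField ε k x : ℂ)‖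
      ≤ ∫ x, magNorm A f x * w x := by
    refine norm_integral_le_of_norm_le iM (.of_forall fun x => ?_)
    rw [norm_mul, RCLike.norm_conj]
    calc _ ≤ ‖f x‖ * (magNorm A f x * (1 / Real.sqrt (‖x‖ ^ 2 + ε))) := by
          gcongr
          refine (norm_sum_mul_le A f (fun k => hardyField ε k x) x).trans ?_
          exact mul_le_mul_of_nonneg_left (sqrt_sum_hardyField_le hε x) (magNorm_nonneg A f x)
      _ = _ := by simp only [hwdef]; ring
  have b2 : ‖∫ x, (∑ k, (starRingEnd ℂ) (magD A k f x) * (hardyField ε k x : ℂ)) * f x‖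
      ≤ ∫ x, magNorm A f x * w x := by
    refine norm_integral_le_of_norm_le iM (.of_forall fun x => ?_)
    rw [norm_mul]
    calc _ ≤ (magNorm A f x * (1 / Real.sqrt (‖x‖ ^ 2 + ε))) * ‖f x‖ := by
          gcongr
          refine (norm_sum_conj_mul_le A f (fun k => hardyField ε k x) x).trans ?_
          exact mul_le_mul_of_nonneg_left (sqrt_sum_hardyField_le hε x) (magNorm_nonneg A f x)
      _ = _ := by simp only [hwdef]; ring
  have b3 : ((n : ℝ) - 2) * ∫ x, w x ^ 2
      ≤ ‖∫ x, (starRingEnd ℂ) (f x) * f x * ((∑ k, pdR (hardyField ε k) k x : ℝ) : ℂ)‖ := by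
    have e : (fun x => (starRingEnd ℂ) (f x) * f x * ((∑ k, pdR (hardyField ε k) k x : ℝ) : ℂ))
        = fun x => ((‖f x‖ ^ 2 * ∑ k, pdR (hardyField ε k) k x : ℝ) : ℂ) := by
      ext x
      rw [mul_comm ((starRingEnd ℂ) (f x)), Complex.mul_conj, Complex.normSq_eq_norm_sq]
      push_cast
      ring
    rw [e, integral_complex_ofReal, Complex.norm_real]
    refine le_trans ?_ (le_abs_self _)
    rw [← integral_const_mul]
    refine integral_mono ?_ ?_ fun x => ?_
    · exact iW.const_mul _
    · exact iD
    · have := mul_le_mul_of_nonneg_left (div_hardyField_ge hε x) (sq_nonneg ‖f x‖)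
      refine le_trans (le_of_eq ?_) this
      simp only [hwdef, div_pow, Real.sq_sqrt (hpos x).le]
      ring
  have b4 : ((n : ℝ) - 2) * ∫ x, w x ^ 2 ≤ 2 * ∫ x, magNorm A f x * w x := by
    refine b3.trans ?_
    have tri : ∀ a b c : ℂ, a + b + c = 0 → ‖c‖ ≤ ‖a‖ + ‖b‖ := fun a b c h => by
      rw [eq_neg_of_add_eq_zero_right h, norm_neg]
      exact norm_add_le a b
    exact (tri _ _ _ ibp).trans ((add_le_add b1 b2).trans_eq (two_mul _).symm)
  have cs := cauchy_schwarz_integral cm hmc hw hwc (magNorm_nonneg A f) hw0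
  have hI : 0 ≤ ∫ x, w x ^ 2 := integral_nonneg fun x => sq_nonneg _
  set S := Real.sqrt (∫ x, w x ^ 2) with hS
  have hSS : ∫ x, w x ^ 2 = S * S := (Real.mul_self_sqrt hI).symm
  rw [hSS] at b4
  have hS0 : 0 ≤ S := Real.sqrt_nonneg _
  have hN0 : 0 ≤ Real.sqrt (∫ x, magNorm A f x ^ 2) := Real.sqrt_nonneg _
  -- The inequality is now quadratic in `S`; divide by `S` unless it vanishes.
  rcases hS0.eq_or_lt with h0 | h0
  · rw [← h0]; positivity
  · rw [div_mul_eq_mul_div, le_div_iff₀ hn2]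
    refine le_of_mul_le_mul_right ?_ h0
    linarith

/-- The Laplacian term: Hardy's inequality against a weight `L` with `|x||L| ≤ K`. The
regularization is removed only here, by dominated convergence, so that no integrability of
`|f|²/|x|²` is needed. -/
lemma integral_weight_le (hn : 3 ≤ n) {K : ℝ} {A : E → E} (hA : Continuous A)
    {f g : E → ℂ} (hf : ContDiff ℝ 1 f) (hfc : HasCompactSupport f)
    (hg : Continuous g) (hgc : HasCompactSupport g) {L : E → ℝ} (hL : Continuous L)
    (hK : 0 < K) (hLK : ∀ x : E, x ≠ 0 → ‖x‖ * |L x| ≤ K) :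
    ∫ x, ‖f x‖ * ‖g x‖ * |L x|
      ≤ K * (2 / ((n : ℝ) - 2)) * Real.sqrt (∫ x, magNorm A f x ^ 2)
        * Real.sqrt (∫ x, ‖g x‖ ^ 2) := by
  have cf := hf.continuous
  have : Nonempty (Fin n) := ⟨⟨0, by omega⟩⟩
  have hLK' : ∀ x : E, ‖x‖ * |L x| ≤ K := fun x => by
    by_cases hx : x = 0
    · simp [hx, hK.le]
    · exact hLK x hx
  have hid : Integrable fun x => ‖f x‖ * ‖g x‖ * |L x| :=
    Continuous.integrable_of_hasCompactSupport (by fun_prop)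
      (HasCompactSupport.intro hfc fun x hx => by simp [image_eq_zero_of_notMem_tsupport hx])
  have hεpos : ∀ m : ℕ, (0 : ℝ) < 1 / ((m : ℝ) + 1) := fun m => by positivity
  have hpos : ∀ (m : ℕ) (x : E), 0 < ‖x‖ ^ 2 + 1 / ((m : ℝ) + 1) := fun m x => by positivity
  have cF : ∀ m : ℕ, Continuous fun x : E => ‖f x‖ / Real.sqrt (‖x‖ ^ 2 + 1 / ((m : ℝ) + 1)) :=
    fun m => cf.norm.div (by fun_prop) fun x => (Real.sqrt_pos.2 (hpos m x)).ne'
  have sF : ∀ m : ℕ, HasCompactSupport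
      fun x : E => ‖f x‖ / Real.sqrt (‖x‖ ^ 2 + 1 / ((m : ℝ) + 1)) :=
    fun m => HasCompactSupport.intro hfc fun x hx => by
      simp [image_eq_zero_of_notMem_tsupport hx]
  set F : ℕ → E → ℝ := fun m x => ‖f x‖ / Real.sqrt (‖x‖ ^ 2 + 1 / ((m : ℝ) + 1)) with hF
  have cG : ∀ m : ℕ, Continuous fun x : E => F m x * ‖g x‖ * (‖x‖ * |L x|) := fun m => by
    have := cF m
    fun_prop
  have lim : Filter.Tendsto (fun m : ℕ => ∫ x : E, F m x * ‖g x‖ * (‖x‖ * |L x|))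
      Filter.atTop (nhds (∫ x, ‖f x‖ * ‖g x‖ * |L x|)) := by
    refine tendsto_integral_of_dominated_convergence _
      (fun m => (cG m).aestronglyMeasurable) hid (fun m => .of_forall fun x => ?_) ?_
    · have hs := Real.sqrt_pos.2 (hpos m x)
      have hle : ‖x‖ ≤ Real.sqrt (‖x‖ ^ 2 + 1 / ((m : ℝ) + 1)) :=
        Real.le_sqrt_of_sq_le (by linarith [hεpos m])
      rw [Real.norm_of_nonneg (by positivity)]
      calc _ = (‖f x‖ * ‖g x‖ * |L x|) * (‖x‖ / Real.sqrt (‖x‖ ^ 2 + 1 / ((m : ℝ) + 1))) := by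
            simp only [hF]; ring
        _ ≤ (‖f x‖ * ‖g x‖ * |L x|) * 1 := by
            gcongr
            exact (div_le_one hs).2 hle
        _ = _ := mul_one _
    · have hne : ∀ᵐ x : E, x ≠ 0 := by
        simp [ae_iff]
      filter_upwards [hne] with x hx
      have hx' : ‖x‖ ≠ 0 := norm_ne_zero_iff.2 hx
      have t1 : Filter.Tendsto (fun m : ℕ => Real.sqrt (‖x‖ ^ 2 + 1 / ((m : ℝ) + 1)))
          Filter.atTop (nhds ‖x‖) := by
        have := (tendsto_one_div_add_atTop_nhds_zero_nat (𝕜 := ℝ)).const_add (‖x‖ ^ 2)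
        simpa [Real.sqrt_sq (norm_nonneg x)] using this.sqrt
      have t2 := (((tendsto_const_nhds (x := ‖f x‖)).div t1 hx').mul_const ‖g x‖).mul_const
        (‖x‖ * |L x|)
      have e : ‖f x‖ * ‖g x‖ * |L x| = ‖f x‖ / ‖x‖ * ‖g x‖ * (‖x‖ * |L x|) := by
        field_simp
      rw [e]
      exact t2
  refine le_of_tendsto' lim fun m => ?_
  have hN0 : ∀ x, 0 ≤ F m x := fun x => by positivity
  calc ∫ x, F m x * ‖g x‖ * (‖x‖ * |L x|) ≤ ∫ x, K * (F m x * ‖g x‖) := by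
        refine integral_mono ((cG m).integrable_of_hasCompactSupport
          (sF m).mul_right.mul_right)
          ((((cF m).mul hg.norm).integrable_of_hasCompactSupport (sF m).mul_right).const_mul K)
          fun x => ?_
        have := mul_le_mul_of_nonneg_left (hLK' x) (mul_nonneg (hN0 x) (norm_nonneg (g x)))
        simpa [mul_comm] using this
    _ = K * ∫ x, F m x * ‖g x‖ := integral_const_mul _ _
    _ ≤ K * (Real.sqrt (∫ x, F m x ^ 2) * Real.sqrt (∫ x, ‖g x‖ ^ 2)) := by
        gcongr
        exact cauchy_schwarz_integral (cF m) (sF m) hg.norm hgc.norm hN0 fun x => norm_nonneg _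
    _ ≤ K * ((2 / ((n : ℝ) - 2) * Real.sqrt (∫ x, magNorm A f x ^ 2))
          * Real.sqrt (∫ x, ‖g x‖ ^ 2)) := by
        gcongr
        exact hardy_regularized hn hA hf hfc (hεpos m)
    _ = _ := by ring

end Helpers

/-- Smoothing bilinear estimate: if `|∇φ| ≤ K` and `|x||Δφ| ≤ K`, then
`|∫ conj f ∇_A g·∇φ| ≤ K(1 + 2/(n-2)) ‖∇_A f‖_{L²} ‖g‖_{L²}`. -/
theorem smoothing_bilinear_estimate (n : ℕ) (hn : 3 ≤ n) (K : ℝ) (hK : 0 < K)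
    (A : EuclideanSpace ℝ (Fin n) → EuclideanSpace ℝ (Fin n)) (hA : Continuous A)
    (φ : EuclideanSpace ℝ (Fin n) → ℝ) (hφ : ContDiff ℝ 2 φ)
    (hgrad : ∀ x : EuclideanSpace ℝ (Fin n), Real.sqrt (∑ k, (pdR φ k x) ^ 2) ≤ K)
    (hlap : ∀ x : EuclideanSpace ℝ (Fin n), x ≠ 0 → ‖x‖ * |lap φ x| ≤ K)
    (f g : EuclideanSpace ℝ (Fin n) → ℂ)
    (hf : ContDiff ℝ (⊤ : ℕ∞) f) (hfc : HasCompactSupport f)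
    (hg : ContDiff ℝ (⊤ : ℕ∞) g) (hgc : HasCompactSupport g) :
    ‖∫ x : EuclideanSpace ℝ (Fin n),
        (starRingEnd ℂ) (f x) * ∑ k, magD A k g x * (pdR φ k x : ℂ)‖
      ≤ K * (1 + 2 / ((n : ℝ) - 2)) *
          Real.sqrt (∫ x : EuclideanSpace ℝ (Fin n), ∑ k, ‖magD A k f x‖ ^ 2) *
          Real.sqrt (∫ x : EuclideanSpace ℝ (Fin n), ‖g x‖ ^ 2) := by
  have hf1 : ContDiff ℝ 1 f := hf.of_le (by exact_mod_cast le_top)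
  have hg1 : ContDiff ℝ 1 g := hg.of_le (by exact_mod_cast le_top)
  have cg := hg1.continuous
  have cm := magNorm_continuous hA hf1
  have hmc := magNorm_hasCompactSupport A hfc
  have cL := lap_continuous hφ
  have ibp := integral_by_parts hA hf1 hfc hg1 (fun k => pdR_contDiff hφ k)
  simp_rw [← magNorm_sq]
  have b2 : ‖∫ x, (∑ k, (starRingEnd ℂ) (magD A k f x) * (pdR φ k x : ℂ)) * g x‖
      ≤ K * (Real.sqrt (∫ x, magNorm A f x ^ 2) * Real.sqrt (∫ x, ‖g x‖ ^ 2)) := by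
    have hi : Integrable fun x => K * (magNorm A f x * ‖g x‖) :=
      ((cm.mul cg.norm).integrable_of_hasCompactSupport hmc.mul_right).const_mul K
    refine (norm_integral_le_of_norm_le hi (.of_forall fun x => ?_)).trans ?_
    · rw [norm_mul]
      calc _ ≤ (magNorm A f x * K) * ‖g x‖ := by
            gcongr
            refine (norm_sum_conj_mul_le A f (fun k => pdR φ k x) x).trans ?_
            exact mul_le_mul_of_nonneg_left (hgrad x) (magNorm_nonneg A f x)
        _ = _ := by ring
    · rw [integral_const_mul]
      gcongr
      exact cauchy_schwarz_integral cm hmc cg.norm hgc.norm (magNorm_nonneg A f)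
        fun x => norm_nonneg _
  have b3 : ‖∫ x, (starRingEnd ℂ) (f x) * g x * ((∑ k, pdR (pdR φ k) k x : ℝ) : ℂ)‖
      ≤ K * (2 / ((n : ℝ) - 2)) * Real.sqrt (∫ x, magNorm A f x ^ 2)
        * Real.sqrt (∫ x, ‖g x‖ ^ 2) := by
    refine (norm_integral_le_integral_norm _).trans ?_
    refine le_trans (le_of_eq ?_) (integral_weight_le hn hA hf1 hfc cg hgc cL hK hlap)
    congr 1
    ext x
    rw [norm_mul, norm_mul, RCLike.norm_conj, Complex.norm_real, Real.norm_eq_abs, lap]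
  rw [add_assoc] at ibp
  rw [eq_neg_of_add_eq_zero_left ibp, norm_neg]
  refine (norm_add_le _ _).trans ((add_le_add b2 b3).trans (le_of_eq ?_))
  ring
end
end
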